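/- arXiv:2112.02921 — 11 statements merged into one kernel-verified Lean document; each statement's English description precedes it below -/
import Mathlib

section
/- Let R be a commutative ring, let u_1, …, u_k ∈ R, let t ≥ 1 be an integer, and set I = (u_1, …, u_k) and J = (u_1^t, …, u_k^t). Then an element r ∈ R is integral over J if and only if r is integral over I^t; that is, the integral closure of J equals the integral closure of I^t. -/
/-!
The proof passes to Rees algebras inside `R[X]`: an element `r` is integral over an ideal `I` exactly
when `r X` is integral over `R[I X]`, the converse being obtained by reading off the coefficient of
`X ^ m` in an equation of degree `m` (`isIntegralOverIdeal_iff`).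

The algebra `R[I ^ t X]` is generated by the `x X` with `x` a product of `t` of the `u i`. For such
an `x` the power `x ^ t` lies in `J ^ t`, so `(x X) ^ t` lies in `R[J X]` and `x X` is integral over
`R[J X]`. Hence `R[I ^ t X]` is integral over `R[J X]`, and transitivity of integrality gives the
nontrivial implication; the other one is monotonicity, since `J ≤ I ^ t`.
-/


/-- An element `r` is integral over an ideal `I`: there is an equation
`r^m + a_1 r^{m-1} + ... + a_m = 0` with `a_i ∈ I^i` and `m ≥ 1`. -/
def IsIntegralOverIdeal {R : Type*} [CommRing R] (I : Ideal R) (r : R) : Prop :=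
  ∃ m : ℕ, 0 < m ∧ ∃ a : ℕ → R, (∀ i ∈ Finset.Icc 1 m, a i ∈ I ^ i) ∧
    r ^ m + ∑ i ∈ Finset.Icc 1 m, a i * r ^ (m - i) = 0

open Polynomial in
/-- Integrality over an ideal is integrality of the degree one monomial over the Rees algebra. -/
theorem isIntegralOverIdeal_iff {R : Type*} [CommRing R] (I : Ideal R) (r : R) :
    IsIntegralOverIdeal I r ↔ IsIntegral (reesAlgebra I) (monomial 1 r : R[X]) := by
  constructor
  · rintro ⟨m, hm, a, ha, h⟩
    classical
    let c : ℕ → reesAlgebra I := fun i =>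
      if hi : a i ∈ I ^ i then ⟨monomial i (a i), reesAlgebra.monomial_mem.2 hi⟩ else 0
    have hc : ∀ i ∈ Finset.Icc 1 m, (c i : R[X]) = monomial i (a i) := by
      intro i hi
      simp [c, ha i hi]
    refine ⟨X ^ m + ∑ i ∈ Finset.Icc 1 m, C (c i) * X ^ (m - i), ?_, ?_⟩
    · apply monic_X_pow_add
      rw [degree_lt_iff_coeff_zero]
      intro n hn
      rw [finsetSum_coeff]
      refine Finset.sum_eq_zero fun i hi => ?_
      rw [Finset.mem_Icc] at hi
      rw [coeff_C_mul_X_pow, if_neg (by omega)]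
    · rw [eval₂_add, eval₂_pow, eval₂_X, eval₂_finsetSum]
      have hs : ∀ i ∈ Finset.Icc 1 m,
          eval₂ (algebraMap (reesAlgebra I) R[X]) (monomial 1 r) (C (c i) * X ^ (m - i))
            = monomial m (a i * r ^ (m - i)) := by
        intro i hi
        rw [eval₂_mul, eval₂_C, eval₂_pow, eval₂_X, Subalgebra.algebraMap_def, hc i hi,
          Algebra.algebraMap_self, RingHom.id_apply, monomial_pow, monomial_mul_monomial]
        rw [Finset.mem_Icc] at hi
        rw [show i + 1 * (m - i) = m by omega]
      rw [Finset.sum_congr rfl hs, monomial_pow, one_mul, ← map_sum, ← map_add, h, map_zero]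
  · rintro ⟨p, hp, h⟩
    -- In the trivial ring `p` may be the constant `1`, whose degree `0` is not allowed.
    rcases Nat.eq_zero_or_pos p.natDegree with h0 | h0
    · rw [hp.natDegree_eq_zero.1 h0, eval₂_one] at h
      have h1 : (1 : R) = 0 := by simpa using congrArg (fun q : R[X] => q.coeff 0) h
      exact ⟨1, one_pos, 0, by simp, eq_zero_of_zero_eq_one h1.symm _⟩
    · set m := p.natDegree with hm
      refine ⟨m, h0, fun i => (p.coeff (m - i) : R[X]).coeff i,
        fun i _ => (p.coeff (m - i)).2 i, ?_⟩
      have key := congrArg (fun q : R[X] => q.coeff m) h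
      simp only [eval₂_eq_sum_range, finsetSum_coeff, coeff_zero] at key
      rw [← hm, Finset.sum_range_succ, hm, hp.coeff_natDegree, ← hm] at key
      rw [← key, add_comm]
      congr 1
      · refine Finset.sum_nbij' (fun i => m - i) (fun j => m - j) ?_ ?_ ?_ ?_ ?_
        · intro i hi; simp at hi ⊢; omega
        · intro i hi; simp at hi ⊢; omega
        · intro i hi; simp at hi ⊢; omega
        · intro i hi; simp at hi ⊢; omega
        · intro i hi
          rw [Finset.mem_Icc] at hi
          rw [monomial_pow, one_mul, Subalgebra.algebraMap_def]
          have : m = i + (m - i) := by omega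
          conv_rhs => rw [this]
          simp [coeff_mul_monomial]
      · simp [monomial_pow]

theorem IsIntegralOverIdeal.mono {R : Type*} [CommRing R] {I J : Ideal R} (h : J ≤ I) {r : R}
    (hr : IsIntegralOverIdeal J r) : IsIntegralOverIdeal I r := by
  obtain ⟨m, hm, a, ha, he⟩ := hr
  exact ⟨m, hm, a, fun i hi => Ideal.pow_right_mono h i (ha i hi), he⟩

open scoped Pointwise in
theorem pow_mem_of_mem_range_pow {R : Type*} [CommRing R] {ι : Type*} (u : ι → R) (t n : ℕ) :
    ∀ x ∈ Set.range u ^ n, x ^ t ∈ Ideal.span (Set.range fun i => u i ^ t) ^ n := by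
  induction n with
  | zero => intro x _; simp
  | succ n ih =>
    intro x hx
    rw [pow_succ, Set.mem_mul] at hx
    obtain ⟨y, hy, _, ⟨i, rfl⟩, rfl⟩ := hx
    rw [mul_pow, pow_succ]
    exact Ideal.mul_mem_mul (ih y hy) (Ideal.subset_span ⟨i, rfl⟩)

open Polynomial in
/-- If `I` is generated by elements integral over `J`, then everything integral over `I` is
integral over `J`. -/
theorem IsIntegralOverIdeal.of_span {R : Type*} [CommRing R] {J : Ideal R} {s : Set R}
    (hs : ∀ x ∈ s, IsIntegralOverIdeal J x) {r : R}
    (hr : IsIntegralOverIdeal (Ideal.span s) r) : IsIntegralOverIdeal J r := by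
  rw [isIntegralOverIdeal_iff] at hr ⊢
  let S := integralClosure (reesAlgebra J) R[X]
  have hle : reesAlgebra (Ideal.span s) ≤ S.restrictScalars R := by
    rw [← adjoin_monomial_eq_reesAlgebra, Algebra.adjoin_le_iff]
    have hsub : Ideal.span s ≤
        ((Subalgebra.toSubmodule (S.restrictScalars R)).comap (monomial 1) : Submodule R R) :=
      Submodule.span_le.2 fun x hx => (isIntegralOverIdeal_iff J x).1 (hs x hx)
    rintro _ ⟨x, hx, rfl⟩
    exact hsub hx
  have hS : IsIntegral S (monomial 1 r : R[X]) := by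
    obtain ⟨p, hp, h⟩ := hr
    let φ : reesAlgebra (Ideal.span s) →+* S :=
      (algebraMap (reesAlgebra (Ideal.span s)) R[X]).codRestrict S fun x => hle x.2
    refine ⟨p.map φ, hp.map _, ?_⟩
    rw [eval₂_map]
    exact h
  exact isIntegral_trans _ hS

open Polynomial in
open scoped Pointwise in
theorem integralClosure_span_pows_eq_integralClosure_pow
    {R : Type*} [CommRing R] (k : ℕ) (u : Fin k → R) (t : ℕ) (ht : 1 ≤ t)
    (I : Ideal R) (hI : I = Ideal.span (Set.range u))
    (J : Ideal R) (hJ : J = Ideal.span (Set.range fun i => u i ^ t)) :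
    ∀ r : R, IsIntegralOverIdeal J r ↔ IsIntegralOverIdeal (I ^ t) r := by
  subst hI hJ
  intro r
  constructor
  · refine IsIntegralOverIdeal.mono (Ideal.span_le.2 ?_)
    rintro _ ⟨i, rfl⟩
    exact Ideal.pow_mem_pow (Ideal.subset_span (Set.mem_range_self i)) t
  · intro hr
    have hpow : Ideal.span (Set.range u) ^ t = Ideal.span (Set.range u ^ t) :=
      Submodule.span_pow _ _
    rw [hpow] at hr
    refine hr.of_span fun x hx => ?_
    rw [isIntegralOverIdeal_iff]
    refine IsIntegral.of_pow ht ?_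
    rw [monomial_pow, one_mul]
    have hmem : monomial t (x ^ t) ∈ reesAlgebra (Ideal.span (Set.range fun i => u i ^ t)) :=
      reesAlgebra.monomial_mem.2 (pow_mem_of_mem_range_pow u t t x hx)
    exact isIntegral_algebraMap (R := reesAlgebra (Ideal.span (Set.range fun i => u i ^ t)))
      (x := ⟨_, hmem⟩)
end

section
/- Let K be a field, R = K[x_1, x_2] the polynomial ring in two variables, and k ≥ 1 an integer. Then the integral closure of the ideal I = (x_1^k, x_2^{k+1}) equals the ideal (x_1, x_2)^{k+1} + (x_1^k); that is, an element r ∈ R is integral over I if and only if r ∈ (x_1,x_2)^{k+1} + (x_1^k). -/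
namespace ClosureAux

/-- In a domain, an element integral over `(p ^ N)`, with `p` prime, is divisible by `p ^ N`. -/
theorem pow_dvd_of_integral {S : Type*} [CommRing S] [IsDomain S] [WfDvdMonoid S] {p : S}
    (hp : Prime p) {N : ℕ} {s : S} {m : ℕ} {a : ℕ → S}
    (ha : ∀ i ∈ Finset.Icc 1 m, p ^ (N * i) ∣ a i)
    (h : s ^ m + ∑ i ∈ Finset.Icc 1 m, a i * s ^ (m - i) = 0) : p ^ N ∣ s := by
  rcases eq_or_ne s 0 with rfl | hs
  · exact dvd_zero _
  obtain ⟨d, u, hu, rfl⟩ := WfDvdMonoid.max_power_factor hs hp.irreducible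
  by_contra hN
  have hd : d < N := by
    by_contra hle
    exact hN (Dvd.dvd.mul_right (pow_dvd_pow p (not_lt.mp hle)) u)
  -- Every term of the sum has `p`-adic valuation larger than `d * m`, the valuation of `s ^ m`.
  have key : p ^ (d * m + 1) ∣ (p ^ d * u) ^ m := by
    rw [eq_neg_of_add_eq_zero_left h, dvd_neg]
    refine Finset.dvd_sum fun i hi => ?_
    have him := Finset.mem_Icc.mp hi
    have hexp : d * m + 1 ≤ N * i + d * (m - i) := by
      obtain ⟨j, rfl⟩ := Nat.exists_eq_add_of_le him.2
      rw [Nat.add_sub_cancel_left]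
      nlinarith [him.1]
    refine (pow_dvd_pow p hexp).trans ?_
    rw [pow_add, mul_pow, pow_mul p d]
    exact mul_dvd_mul (ha i hi) (Dvd.intro _ rfl)
  rw [mul_pow, ← pow_mul, pow_succ] at key
  exact hu (hp.dvd_of_dvd_pow ((mul_dvd_mul_iff_left (pow_ne_zero _ hp.ne_zero)).mp key))

/-- Cayley–Hamilton: if `r L ⊆ I L` for a finitely generated ideal `L` containing a nonzero
element of the domain, then `r` is integral over `I`. -/
theorem integral_of_mul_le {R : Type*} [CommRing R] [IsDomain R] {I L : Ideal R} (hL : L.FG)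
    {e : R} (he : e ∈ L) (he0 : e ≠ 0) {r : R} (hr : ∀ s ∈ L, r * s ∈ I * L) :
    IsIntegralOverIdeal I r := by
  have : Module.Finite R L := Module.Finite.iff_fg.mpr hL
  obtain ⟨p, hp, -, hc, h0⟩ :=
    LinearMap.exists_monic_and_natDegree_eq_and_coeff_mem_pow_and_aeval_eq_zero R
      (algebraMap R (Module.End R L) r) I (by
        rintro _ ⟨s, rfl⟩
        rw [Submodule.mem_smul_top_iff]
        exact hr s s.2)
  have hpr : p.eval r = 0 := by
    rw [Polynomial.aeval_algebraMap_apply] at h0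
    have := congrArg Subtype.val (LinearMap.congr_fun h0 ⟨e, he⟩)
    simpa [Module.algebraMap_end_apply, he0] using this
  refine ⟨p.natDegree, ?_, fun i => p.coeff (p.natDegree - i), fun i hi => ?_, ?_⟩
  · by_contra hdeg
    rw [hp.natDegree_eq_zero.mp (by omega)] at hpr
    simp at hpr
  · have := hc (p.natDegree - i)
    rwa [Nat.sub_sub_self (Finset.mem_Icc.mp hi).2] at this
  · rw [← hpr, Polynomial.eval_eq_sum_range, ← Finset.sum_range_reflect, Finset.sum_range_succ',
      Finset.range_eq_Ico, Finset.sum_Ico_add' (fun i => p.coeff (p.natDegree + 1 - 1 - i) *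
        r ^ (p.natDegree + 1 - 1 - i)) 0 p.natDegree 1, add_comm]
    simp [hp.coeff_natDegree, Finset.Ico_add_one_right_eq_Icc]

theorem mul_pow_mem_span_pair_pow {R : Type*} [CommRing R] (x y : R) {n a b : ℕ}
    (h : n ≤ a + b) : x ^ a * y ^ b ∈ Ideal.span {x, y} ^ n := by
  refine Ideal.pow_le_pow_right h ?_
  rw [pow_add]
  exact Ideal.mul_mem_mul (Ideal.pow_mem_pow (Ideal.subset_span (by simp)) _)
    (Ideal.pow_mem_pow (Ideal.subset_span (by simp)) _)

open MvPolynomial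

variable {K : Type*} [Field K]

/-- The homomorphism `x_i ↦ x_i t ^ (w i)`; the coefficient of `t ^ n` in the image of `f` is the
part of `f` of weight `n`. -/
noncomputable def weightHom (K : Type*) [Field K] (w : Fin 2 → ℕ) :
    MvPolynomial (Fin 2) K →+* Polynomial (MvPolynomial (Fin 2) K) :=
  eval₂Hom (Polynomial.C.comp C) fun i => Polynomial.C (X i) * Polynomial.X ^ w i

theorem weightHom_X (w : Fin 2 → ℕ) (i : Fin 2) :
    weightHom K w (X i) = Polynomial.C (X i) * Polynomial.X ^ w i := by
  simp [weightHom]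

theorem weightHom_monomial (w : Fin 2 → ℕ) (d : Fin 2 →₀ ℕ) (c : K) :
    weightHom K w (monomial d c) =
      Polynomial.C (monomial d c) * Polynomial.X ^ (w 0 * d 0 + w 1 * d 1) := by
  rw [weightHom, coe_eval₂Hom, eval₂_monomial, monomial_eq (s := d)]
  simp only [Finsupp.prod_fintype, pow_zero, implies_true, Fin.prod_univ_two, RingHom.comp_apply,
    map_mul, map_pow]
  ring

theorem coeff_weightHom (w : Fin 2 → ℕ) (f : MvPolynomial (Fin 2) K) (n : ℕ) (d : Fin 2 →₀ ℕ) :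
    coeff d ((weightHom K w f).coeff n) =
      if n = w 0 * d 0 + w 1 * d 1 then coeff d f else 0 := by
  induction f using MvPolynomial.induction_on' with
  | monomial e c =>
    rw [weightHom_monomial, Polynomial.coeff_C_mul_X_pow]
    by_cases hed : e = d
    · subst hed
      split_ifs <;> simp
    · split_ifs <;> simp [coeff_monomial, hed]
  | add p q hp hq =>
    rw [map_add, Polynomial.coeff_add, coeff_add, hp, hq]
    split_ifs <;> simp

theorem weight_le_of_dvd {w : Fin 2 → ℕ} {f : MvPolynomial (Fin 2) K} {N : ℕ}
    (h : Polynomial.X ^ N ∣ weightHom K w f) {d : Fin 2 →₀ ℕ} (hd : d ∈ f.support) :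
    N ≤ w 0 * d 0 + w 1 * d 1 := by
  by_contra hlt
  have h1 := coeff_weightHom w f (w 0 * d 0 + w 1 * d 1) d
  rw [Polynomial.X_pow_dvd_iff.mp h _ (not_le.mp hlt), if_pos rfl, coeff_zero] at h1
  exact mem_support_iff.mp hd h1.symm

/-- A monomial of weight at least `k * (k + 1)` lies in `(x₁, x₂) ^ (k + 1) + (x₁ ^ k)`: if the
exponent of `x₁` is below `k`, the total degree must be at least `k + 1`. -/
theorem monomial_mem {k : ℕ} {d : Fin 2 →₀ ℕ} (c : K)
    (hd : k * (k + 1) ≤ (k + 1) * d 0 + k * d 1) :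
    monomial d c ∈ (Ideal.span {(X 0 : MvPolynomial (Fin 2) K), X 1}) ^ (k + 1) ⊔
      Ideal.span {(X 0 : MvPolynomial (Fin 2) K) ^ k} := by
  have hm : monomial d c = C c * ((X 0 : MvPolynomial (Fin 2) K) ^ d 0 * X 1 ^ d 1) := by
    rw [monomial_eq, Finsupp.prod_fintype _ _ (by simp), Fin.prod_univ_two]
  rw [hm]
  apply Ideal.mul_mem_left
  by_cases h : k ≤ d 0
  · exact Ideal.mem_sup_right (Ideal.mul_mem_right _ _
      (Ideal.mem_span_singleton.mpr (pow_dvd_pow _ h)))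
  · have hdeg : k + 1 ≤ d 0 + d 1 := by
      by_contra hlt
      nlinarith
    exact Ideal.mem_sup_left (mul_pow_mem_span_pair_pow _ _ hdeg)

/-- The ideal `J = (x, y) ^ (k + 1) + (x ^ k)` satisfies `J ^ 2 ≤ (x ^ k, y ^ (k + 1)) J`. -/
theorem mul_self_le {R : Type*} [CommRing R] (x y : R) (k : ℕ) :
    (Ideal.span {x, y} ^ (k + 1) ⊔ Ideal.span {x ^ k}) *
        (Ideal.span {x, y} ^ (k + 1) ⊔ Ideal.span {x ^ k}) ≤
      Ideal.span {x ^ k, y ^ (k + 1)} *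
        (Ideal.span {x, y} ^ (k + 1) ⊔ Ideal.span {x ^ k}) := by
  set m := Ideal.span {x, y} with hm
  set J := m ^ (k + 1) ⊔ Ideal.span {x ^ k} with hJ
  have hx : x ^ k ∈ Ideal.span {x ^ k, y ^ (k + 1)} := Ideal.subset_span (by simp)
  have hy : y ^ (k + 1) ∈ Ideal.span {x ^ k, y ^ (k + 1)} := Ideal.subset_span (by simp)
  have hmon : ∀ a b, k + 1 ≤ a + b → x ^ a * y ^ b ∈ J := fun a b hab =>
    Ideal.mem_sup_left (mul_pow_mem_span_pair_pow _ _ hab)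
  have hxJ : Ideal.span {x ^ k} * J ≤ Ideal.span {x ^ k, y ^ (k + 1)} * J :=
    Ideal.mul_mono_left ((Ideal.span_singleton_le_iff_mem _).mpr hx)
  have hmm : m ^ (k + 1) * m ^ (k + 1) ≤ Ideal.span {x ^ k, y ^ (k + 1)} * J := by
    rw [← pow_add, hm, Ideal.span_insert, ← Ideal.add_eq_sup, add_pow, Ideal.sum_eq_sup]
    refine Finset.sup_le fun a ha => Ideal.mul_le_left.trans ?_
    rw [Ideal.span_singleton_pow, Ideal.span_singleton_pow, Ideal.span_singleton_mul_span_singleton,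
      Ideal.span_singleton_le_iff_mem]
    obtain ⟨b, hb⟩ := Nat.exists_eq_add_of_le (Finset.mem_range_succ_iff.mp ha)
    rw [hb, Nat.add_sub_cancel_left]
    -- Split off `x ^ k` or `y ^ (k + 1)`; the complementary monomial has degree at least `k + 1`.
    by_cases h : k ≤ a
    · obtain ⟨c, rfl⟩ := Nat.exists_eq_add_of_le h
      rw [pow_add x, mul_assoc]
      exact Ideal.mul_mem_mul hx (hmon c b (by omega))
    · obtain ⟨c, rfl⟩ := Nat.exists_eq_add_of_le (show k + 1 ≤ b by omega)
      rw [pow_add y (k + 1) c, mul_left_comm]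
      exact Ideal.mul_mem_mul hy (hmon a c (by omega))
  rw [hJ, Ideal.sup_mul, ← hJ]
  refine sup_le ?_ hxJ
  rw [hJ, Ideal.mul_sup, ← hJ]
  refine sup_le hmm ?_
  rw [mul_comm]
  exact (Ideal.mul_mono_right le_sup_left).trans hxJ

end ClosureAux

open MvPolynomial in
theorem integralClosure_of_x1k_x2k1 (K : Type*) [Field K] (k : ℕ) (hk : 1 ≤ k)
    (I : Ideal (MvPolynomial (Fin 2) K))
    (hI : I = Ideal.span {(X 0 : MvPolynomial (Fin 2) K) ^ k, X 1 ^ (k + 1)}) :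
    ∀ r : MvPolynomial (Fin 2) K,
      IsIntegralOverIdeal I r ↔
        r ∈ (Ideal.span {(X 0 : MvPolynomial (Fin 2) K), X 1}) ^ (k + 1) ⊔
          Ideal.span {(X 0 : MvPolynomial (Fin 2) K) ^ k} := by
  intro r
  constructor
  · rintro ⟨m, -, a, ha, h⟩
    let w : Fin 2 → ℕ := ![k + 1, k]
    have hmap : I.map (ClosureAux.weightHom K w) ≤
        Ideal.span {Polynomial.X ^ (k * (k + 1))} := by
      rw [hI, Ideal.map_span, Ideal.span_le]
      rintro _ ⟨g, rfl | rfl, rfl⟩ <;>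
        rw [SetLike.mem_coe, Ideal.mem_span_singleton, map_pow, ClosureAux.weightHom_X, mul_pow,
          ← pow_mul]
      · exact Dvd.dvd.mul_left (pow_dvd_pow _ (by simp [w, mul_comm])) _
      · exact Dvd.dvd.mul_left (pow_dvd_pow _ (by simp [w])) _
    have hdvd : Polynomial.X ^ (k * (k + 1)) ∣ ClosureAux.weightHom K w r := by
      refine ClosureAux.pow_dvd_of_integral (a := fun i => ClosureAux.weightHom K w (a i)) (m := m)
        Polynomial.prime_X (fun i hi => ?_) ?_
      · have h1 := Ideal.mem_map_of_mem (ClosureAux.weightHom K w) (ha i hi)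
        rw [Ideal.map_pow] at h1
        have h2 := Ideal.pow_right_mono hmap i h1
        rwa [Ideal.span_singleton_pow, Ideal.mem_span_singleton, ← pow_mul] at h2
      · simpa using congrArg (ClosureAux.weightHom K w) h
    rw [r.as_sum]
    exact Ideal.sum_mem _ fun d hd =>
      ClosureAux.monomial_mem _ (ClosureAux.weight_le_of_dvd hdvd hd)
  · intro hr
    refine ClosureAux.integral_of_mul_le
      (L := Ideal.span {X 0, X 1} ^ (k + 1) ⊔ Ideal.span {X 0 ^ k}) (IsNoetherian.noetherian _)
      (Ideal.mem_sup_right (Ideal.mem_span_singleton_self _))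
      (pow_ne_zero k (X_ne_zero (0 : Fin 2))) fun s hs => ?_
    rw [hI]
    exact ClosureAux.mul_self_le _ _ k (Ideal.mul_mem_mul hr hs)
end

section
/- Let K be a field, R = K[x_1, x_2] the polynomial ring in two variables, and k ≥ 1 an integer. Then the ideal I = (x_1, x_2^k) is normal: for every integer m ≥ 1, every element of R integral over I^m already lies in I^m (i.e., all powers of I are integrally closed). -/
/-- An element satisfying an equation of integral dependence on `(p ^ N)`, with `p` prime, is
divisible by `p ^ N`. -/
theorem Prime.pow_dvd_of_integral_equation {A : Type*} [CommRing A] [IsDomain A]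
    [WfDvdMonoid A] {p : A} (hp : Prime p) {N n : ℕ} (hn : 0 < n) {s : A} {b : ℕ → A}
    (hb : ∀ i ∈ Finset.Icc 1 n, p ^ (N * i) ∣ b i)
    (h : s ^ n + ∑ i ∈ Finset.Icc 1 n, b i * s ^ (n - i) = 0) : p ^ N ∣ s := by
  rcases eq_or_ne s 0 with rfl | hs
  · exact dvd_zero _
  obtain ⟨d, u, hu, rfl⟩ := WfDvdMonoid.max_power_factor hs hp.irreducible
  rcases le_or_gt N d with hd | hd
  · exact (pow_dvd_pow p hd).mul_right u
  -- If the multiplicity `d` of `p` in `s` is below `N`, the leading term has multiplicity exactly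
  -- `d * n`, while all other terms have a larger one.
  exfalso
  have hsum : p ^ (d * n + 1) ∣ ∑ i ∈ Finset.Icc 1 n, b i * (p ^ d * u) ^ (n - i) := by
    refine Finset.dvd_sum fun i hi => ?_
    have hi' := Finset.mem_Icc.1 hi
    have hle : d * n + 1 ≤ N * i + d * (n - i) := by
      obtain ⟨j, rfl⟩ := Nat.exists_eq_add_of_le hi'.2
      rw [Nat.add_sub_cancel_left]
      nlinarith
    refine (pow_dvd_pow p hle).trans ?_
    rw [pow_add, mul_pow, ← pow_mul]
    exact mul_dvd_mul (hb i hi) (dvd_mul_right _ _)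
  have hlead : p ^ (d * n + 1) ∣ (p ^ d * u) ^ n := by
    rw [eq_neg_of_add_eq_zero_left h]
    exact hsum.neg_right
  rw [mul_pow, ← pow_mul, pow_succ] at hlead
  exact hu (hp.dvd_of_dvd_pow ((mul_dvd_mul_iff_left (pow_ne_zero _ hp.ne_zero)).1 hlead))

open MvPolynomial in
/-- The homomorphism `R → R[T]` with `x₁ ↦ x₁ T ^ k` and `x₂ ↦ x₂ T`. It multiplies the component
of weight `n` by `T ^ n`, for the weights `k` of `x₁` and `1` of `x₂`. -/
noncomputable def weightHom {K : Type*} [Field K] (k : ℕ) :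
    MvPolynomial (Fin 2) K →ₐ[K] Polynomial (MvPolynomial (Fin 2) K) :=
  aeval ![Polynomial.C (X 0) * Polynomial.X ^ k, Polynomial.C (X 1) * Polynomial.X]

open MvPolynomial in
theorem weightHom_monomial {K : Type*} [Field K] (k : ℕ) (e : Fin 2 →₀ ℕ) (c : K) :
    weightHom k (monomial e c) =
      Polynomial.C (monomial e c) * Polynomial.X ^ (k * e 0 + e 1) := by
  rw [weightHom, aeval_monomial, Finsupp.prod_fintype _ _ (by simp), Fin.prod_univ_two,
    monomial_fin_two, IsScalarTower.algebraMap_apply K (MvPolynomial (Fin 2) K)]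
  simp only [Matrix.cons_val_zero, Matrix.cons_val_one, Polynomial.algebraMap_eq,
    MvPolynomial.algebraMap_eq, map_mul, map_pow]
  ring

open MvPolynomial in
theorem coeff_coeff_weightHom {K : Type*} [Field K] (k : ℕ) (r : MvPolynomial (Fin 2) K)
    (e : Fin 2 →₀ ℕ) :
    coeff e ((weightHom k r).coeff (k * e 0 + e 1)) = coeff e r := by
  induction r using MvPolynomial.induction_on' with
  | monomial u c =>
    rw [weightHom_monomial, Polynomial.coeff_C_mul_X_pow]
    by_cases hu : u = e
    · simp [hu]
    · split_ifs <;> simp [hu]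
  | add p q hp hq => simp [hp, hq]

open MvPolynomial in
theorem weightHom_dvd_of_mem {K : Type*} [Field K] (k m : ℕ) {f : MvPolynomial (Fin 2) K}
    (hf : f ∈ Ideal.span {(X 0 : MvPolynomial (Fin 2) K), X 1 ^ k} ^ m) :
    Polynomial.X ^ (k * m) ∣ weightHom k f := by
  have hle : Ideal.span {(X 0 : MvPolynomial (Fin 2) K), X 1 ^ k} ≤
      (Ideal.span {Polynomial.X ^ k}).comap (weightHom k) := by
    rw [Ideal.span_le]
    rintro _ (rfl | rfl)
    · simp [weightHom, Ideal.mem_span_singleton]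
    · simp [weightHom, Ideal.mem_span_singleton, mul_pow]
  have := (Ideal.pow_right_mono hle m).trans (Ideal.le_comap_pow _ m) hf
  rwa [Ideal.mem_comap, Ideal.span_singleton_pow, Ideal.mem_span_singleton, ← pow_mul] at this

open MvPolynomial in
theorem mem_pow_of_weightHom_dvd {K : Type*} [Field K] {k : ℕ} (hk : 1 ≤ k) (m : ℕ)
    {f : MvPolynomial (Fin 2) K} (hf : Polynomial.X ^ (k * m) ∣ weightHom k f) :
    f ∈ Ideal.span {(X 0 : MvPolynomial (Fin 2) K), X 1 ^ k} ^ m := by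
  rw [f.as_sum]
  refine Ideal.sum_mem _ fun e he => ?_
  have hwt : k * m ≤ k * e 0 + e 1 := by
    by_contra! hlt
    rw [mem_support_iff, ← coeff_coeff_weightHom k,
      Polynomial.X_pow_dvd_iff.1 hf _ hlt, coeff_zero] at he
    exact he rfl
  have hm : m ≤ e 0 + e 1 / k := by
    rw [← Nat.mul_add_div hk]
    exact (Nat.le_div_iff_mul_le hk).2 (by rwa [mul_comm])
  rw [monomial_fin_two, mul_assoc]
  refine Ideal.mul_mem_left _ _ (Ideal.pow_le_pow_right hm ?_)
  have hdiv : (X 1 : MvPolynomial (Fin 2) K) ^ e 1 = (X 1 ^ k) ^ (e 1 / k) * X 1 ^ (e 1 % k) := by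
    rw [← pow_mul, ← pow_add, Nat.div_add_mod]
  rw [pow_add, hdiv]
  exact Ideal.mul_mem_mul (Ideal.pow_mem_pow (Ideal.subset_span (by simp)) _)
    (Ideal.mul_mem_right _ _ (Ideal.pow_mem_pow (Ideal.subset_span (by simp)) _))

open MvPolynomial in
theorem normal_of_x1_x2k (K : Type*) [Field K] (k : ℕ) (hk : 1 ≤ k)
    (I : Ideal (MvPolynomial (Fin 2) K))
    (hI : I = Ideal.span {(X 0 : MvPolynomial (Fin 2) K), X 1 ^ k}) :
    ∀ m : ℕ, 1 ≤ m → ∀ r : MvPolynomial (Fin 2) K,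
      IsIntegralOverIdeal (I ^ m) r → r ∈ I ^ m := by
  subst hI
  rintro m - r ⟨n, hn, a, ha, h⟩
  refine mem_pow_of_weightHom_dvd hk m ?_
  refine Polynomial.prime_X.pow_dvd_of_integral_equation hn (b := fun i => weightHom k (a i))
    (fun i hi => ?_) ?_
  · rw [mul_assoc]
    exact weightHom_dvd_of_mem k (m * i) (by rw [pow_mul]; exact ha i hi)
  · simpa using congrArg (weightHom k) h
end

section
/- Let K be a field, R = K[x_1, …, x_n] the polynomial ring in n variables, and I ⊆ R a monomial ideal (an ideal generated by a set of monomials) whose set of associated primes is the singleton {p}, i.e., I is p-primary. Let Ī be the ideal of R generated by all elements of R integral over I. Then the set of associated primes of R/Ī is also {p}. -/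
section

open MvPolynomial

-- `MvPolynomial τ B` as an algebra over `MvPolynomial τ A`, for an `A`-algebra `B`
attribute [local instance] MvPolynomial.algebraMvPolynomial

/-! ### Extension of a primary ideal with maximal radical to a polynomial ring -/

/-- Over a ring in which every element is nilpotent or a unit, a non-nilpotent polynomial is a
nonzerodivisor. -/
theorem MvPolynomial.eq_zero_of_mul_eq_zero_of_not_isNilpotent {τ T : Type*}
    [LinearOrder τ] [WellFoundedGT τ] [CommRing T] (hT : ∀ a : T, IsNilpotent a ∨ IsUnit a)
    (g f : MvPolynomial τ T) (hg : ¬ IsNilpotent g) (h : g * f = 0) : f = 0 := by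
  classical
  -- the part of `g` with unit coefficients: it differs from `g` by a nilpotent, and its leading
  -- coefficient is a unit
  let g₀ : MvPolynomial τ T := ∑ d ∈ g.support with IsUnit (g.coeff d), monomial d (g.coeff d)
  have hc : ∀ d, g₀.coeff d = if IsUnit (g.coeff d) then g.coeff d else 0 := by
    intro d
    simp only [g₀, coeff_sum, coeff_monomial, Finset.sum_ite_eq', Finset.mem_filter, mem_support_iff]
    by_cases h0 : g.coeff d = 0 <;> simp [h0]
  have hnil : IsNilpotent (g₀ - g) := by
    rw [MvPolynomial.isNilpotent_iff]
    intro d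
    rw [coeff_sub, hc]
    split_ifs with hu
    · simp
    · simpa using (hT (g.coeff d)).resolve_right hu
  have h0 : g₀ ≠ 0 := by
    intro h0
    rw [h0, zero_sub, isNilpotent_neg_iff] at hnil
    exact hg hnil
  have hlc : IsRegular ((MonomialOrder.lex (σ := τ)).leadingCoeff g₀) := by
    have h1 : (MonomialOrder.lex (σ := τ)).leadingCoeff g₀ ≠ 0 :=
      MonomialOrder.leadingCoeff_ne_zero_iff.2 h0
    rw [MonomialOrder.leadingCoeff, hc] at h1 ⊢
    split_ifs at h1 ⊢ with hu
    · exact hu.isRegular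
    · exact absurd rfl h1
  have hreg : ∀ x : MvPolynomial τ T, g₀ * x = 0 → x = 0 := by
    intro x hx
    have := MonomialOrder.leadingCoeff_mul_of_isRegular_left (m := MonomialOrder.lex)
      (g := x) hlc
    rw [hx, MonomialOrder.leadingCoeff_zero] at this
    have h2 := hlc.left.mul_left_eq_zero_iff.1 this.symm
    exact MonomialOrder.leadingCoeff_eq_zero_iff.1 h2
  obtain ⟨N, hN⟩ := hnil
  -- `g = g₀ - (g₀ - g)` divides `g₀ ^ N - (g₀ - g) ^ N = g₀ ^ N`
  have hpow : g₀ ^ N * f = 0 := by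
    obtain ⟨c, hc'⟩ := sub_dvd_pow_sub_pow g₀ (g₀ - g) N
    rw [hN, sub_zero, sub_sub_cancel] at hc'
    rw [hc', mul_right_comm, h, zero_mul]
  clear hN
  induction N with
  | zero => simpa using hpow
  | succ k ih => exact ih (hreg _ (by rw [← hpow]; ring))

theorem isPrimary_map_C {τ S : Type*} [LinearOrder τ] [WellFoundedGT τ] [CommRing S]
    (Q : Ideal S) (hQ : Q.radical.IsMaximal) :
    (Q.map (C : S →+* MvPolynomial τ S)).IsPrimary := by
  have hmem : ∀ f : MvPolynomial τ S, f ∈ Q.map (C : S →+* MvPolynomial τ S) ↔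
      MvPolynomial.map (Ideal.Quotient.mk Q) f = 0 := by
    intro f
    rw [mem_map_C_iff, MvPolynomial.ext_iff]
    simp [coeff_map, Ideal.Quotient.eq_zero_iff_mem]
  have hT : ∀ a : S ⧸ Q, IsNilpotent a ∨ IsUnit a := by
    intro a
    obtain ⟨a, rfl⟩ := Ideal.Quotient.mk_surjective a
    by_cases ha : a ∈ Q.radical
    · left
      obtain ⟨k, hk⟩ := ha
      exact ⟨k, by rw [← map_pow, Ideal.Quotient.eq_zero_iff_mem]; exact hk⟩
    · right
      by_contra hu
      obtain ⟨M, hM, haM⟩ := exists_max_ideal_of_mem_nonunits hu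
      have hM' : (M.comap (Ideal.Quotient.mk Q)).IsPrime := hM.isPrime.comap _
      have hle : Q.radical ≤ M.comap (Ideal.Quotient.mk Q) := by
        rw [hM'.radical_le_iff]
        intro x hx
        rw [Ideal.mem_comap, Ideal.Quotient.eq_zero_iff_mem.2 hx]
        exact zero_mem _
      exact ha ((hQ.eq_of_le hM'.ne_top hle) ▸ haM)
  rw [Ideal.isPrimary_iff]
  refine ⟨fun h => ?_, fun {f g} hfg => ?_⟩
  · have h1 := (Ideal.eq_top_iff_one _).1 h
    rw [mem_map_C_iff] at h1
    have h2 : (1 : S) ∈ Q := by simpa using h1 0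
    exact hQ.ne_top (by rw [(Ideal.eq_top_iff_one Q).2 h2, Ideal.radical_top])
  · rw [or_iff_not_imp_right]
    intro hg
    rw [hmem] at hfg ⊢
    rw [map_mul, mul_comm] at hfg
    refine MvPolynomial.eq_zero_of_mul_eq_zero_of_not_isNilpotent hT _ _ (fun hn => hg ?_) hfg
    obtain ⟨k, hk⟩ := hn
    exact ⟨k, by rw [hmem, map_pow, hk]⟩

/-! ### Integrality over an ideal -/

theorem IsIntegralOverIdeal.map {A B : Type*} [CommRing A] [CommRing B] (φ : A →+* B)
    {I : Ideal A} {r : A} (h : IsIntegralOverIdeal I r) : IsIntegralOverIdeal (I.map φ) (φ r) := by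
  obtain ⟨m, hm, a, ha, h⟩ := h
  refine ⟨m, hm, fun i => φ (a i), fun i hi => ?_, ?_⟩
  · rw [← Ideal.map_pow]
    exact Ideal.mem_map_of_mem _ (ha i hi)
  · simpa using congrArg φ h

theorem IsIntegralOverIdeal.mem_radical {A : Type*} [CommRing A] {I : Ideal A} {r : A}
    (h : IsIntegralOverIdeal I r) : r ∈ I.radical := by
  obtain ⟨m, hm, a, ha, h⟩ := h
  refine ⟨m, ?_⟩
  rw [eq_neg_of_add_eq_zero_left h]
  refine neg_mem (sum_mem fun i hi => Ideal.mul_mem_right _ _ ?_)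
  exact Ideal.pow_le_self (by simp at hi; omega) (ha i hi)

theorem IsIntegralOverIdeal.of_mem {A : Type*} [CommRing A] {I : Ideal A} {r : A}
    (h : r ∈ I) : IsIntegralOverIdeal I r :=
  ⟨1, one_pos, fun _ => -r, by simpa using h, by simp⟩

/-- If `r t` is integral over the Rees algebra of `J` in `S[t]`, then `r` is integral over `J`:
if the equation has degree `m`, compare the coefficients of `t ^ m`. -/
theorem isIntegralOverIdeal_of_rees {S : Type*} [CommRing S] {J : Ideal S} {r : S}
    (h : IsIntegral (reesAlgebra J) (Polynomial.monomial 1 r)) : IsIntegralOverIdeal J r := by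
  rcases subsingleton_or_nontrivial S with hS | hS
  · exact .of_mem (Subsingleton.elim 0 r ▸ zero_mem J)
  obtain ⟨q, hq, h⟩ := h
  have hmon : q.natDegree ≠ 0 := by
    intro h0
    rw [hq.natDegree_eq_zero.1 h0] at h
    simp at h
  refine ⟨q.natDegree, Nat.pos_of_ne_zero hmon,
    fun i => ((q.coeff (q.natDegree - i) : reesAlgebra J) : Polynomial S).coeff i,
    fun i _ => (q.coeff (q.natDegree - i)).2 i, ?_⟩
  have h2 := congrArg (fun f : Polynomial S => f.coeff q.natDegree) h
  simp only [Polynomial.eval₂_eq_sum_range, Polynomial.finsetSum_coeff, Polynomial.monomial_pow,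
    Polynomial.coeff_zero] at h2
  rw [Finset.sum_range_succ, hq.coeff_natDegree, map_one, one_mul] at h2
  rw [← h2, add_comm]
  congr 1
  · refine Finset.sum_bij' (fun i _ => q.natDegree - i) (fun i _ => q.natDegree - i) ?_ ?_ ?_ ?_ ?_
    · intro i hi; simp at hi ⊢; omega
    · intro i hi; simp at hi ⊢; omega
    · intro i hi; simp at hi ⊢; omega
    · intro i hi; simp at hi ⊢; omega
    · intro i hi
      simp only [Finset.mem_Icc] at hi
      have e : q.natDegree = i + 1 * (q.natDegree - i) := by omega
      conv_rhs => rw [e]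
      rw [← Polynomial.C_mul_X_pow_eq_monomial, ← mul_assoc]
      conv_rhs => rw [← e, one_mul]
      conv_rhs => rw [Polynomial.coeff_mul_X_pow']
      rw [if_pos (by omega), Polynomial.coeff_mul_C, Nat.sub_sub_self hi.2]
      rfl
  · simp

/-- The coefficients of a polynomial integral over the extension of `J` are integral over `J`. -/
theorem IsIntegralOverIdeal.coeff {τ S : Type*} [CommRing S] {J : Ideal S}
    {f : MvPolynomial τ S}
    (h : IsIntegralOverIdeal (J.map (C : S →+* MvPolynomial τ S)) f) (d : τ →₀ ℕ) :
    IsIntegralOverIdeal J (f.coeff d) := by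
  obtain ⟨m, hm, a, ha, h⟩ := h
  -- `S[y]` is embedded in `S[t][y]`, where `t` is the variable of the Rees algebra
  let ψ : MvPolynomial τ S →+* MvPolynomial τ (Polynomial S) := MvPolynomial.map Polynomial.C
  let t : MvPolynomial τ (Polynomial S) := C Polynomial.X
  have hcoeff : ∀ i (g : MvPolynomial τ S) e,
      (t ^ i * ψ g).coeff e = Polynomial.monomial i (g.coeff e) := by
    intro i g e
    simp only [t, ψ]
    rw [← map_pow, coeff_C_mul, coeff_map, mul_comm, Polynomial.C_mul_X_pow_eq_monomial]
  -- multiplying the `i`-th coefficient of the equation by `t ^ i` puts it in `(reesAlgebra J)[y]`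
  have hlift : ∀ i ∈ Finset.Icc 1 m, ∃ b : MvPolynomial τ (reesAlgebra J),
      algebraMap (MvPolynomial τ (reesAlgebra J)) (MvPolynomial τ (Polynomial S)) b
        = t ^ i * ψ (a i) := by
    intro i hi
    have hai := ha i hi
    rw [← Ideal.map_pow, mem_map_C_iff] at hai
    refine ⟨∑ e ∈ (a i).support, monomial e
      ⟨Polynomial.monomial i ((a i).coeff e), reesAlgebra.monomial_mem.2 (hai e)⟩, ?_⟩
    rw [map_sum]
    ext1 e
    rw [hcoeff, coeff_sum]
    classical
    simp only [algebraMap_def, map_monomial, coeff_monomial]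
    rw [Finset.sum_ite_eq']
    split_ifs with he
    · rfl
    · rw [notMem_support_iff.1 he, map_zero]
  choose! b hb using hlift
  have hint : IsIntegral (MvPolynomial τ (reesAlgebra J)) (t * ψ f) := by
    refine ⟨Polynomial.X ^ m + ∑ i ∈ Finset.Icc 1 m,
      Polynomial.C (b i) * Polynomial.X ^ (m - i), ?_, ?_⟩
    · refine Polynomial.monic_X_pow_add ?_
      refine (Polynomial.degree_sum_le _ _).trans_lt ?_
      rw [Finset.sup_lt_iff (by exact WithBot.bot_lt_coe m)]
      intro i hi
      refine (Polynomial.degree_C_mul_X_pow_le _ _).trans_lt ?_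
      simp at hi
      exact_mod_cast (by omega : m - i < m)
    · have h3 := congrArg (fun x => t ^ m * ψ x) h
      simp only [map_add, map_sum, map_mul, map_pow, map_zero, mul_zero] at h3
      rw [← h3, mul_add, Finset.mul_sum, Polynomial.eval₂_add, Polynomial.eval₂_finsetSum]
      congr 1
      · simp [mul_pow]
      · refine Finset.sum_congr rfl fun i hi => ?_
        simp only [Polynomial.eval₂_mul, Polynomial.eval₂_C, Polynomial.eval₂_pow,
          Polynomial.eval₂_X, hb i hi]
        have : t ^ m = t ^ i * t ^ (m - i) := by
          rw [← pow_add]; congr 1; simp at hi; omega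
        rw [this]; ring
  have := MvPolynomial.isIntegral_iff_isIntegral_coeff.1 hint d
  rw [← pow_one t, hcoeff] at this
  exact isIntegralOverIdeal_of_rees this

theorem span_isIntegralOverIdeal_map_C {τ S : Type*} [CommRing S] (J : Ideal S) :
    Ideal.span {f | IsIntegralOverIdeal (J.map (C : S →+* MvPolynomial τ S)) f} =
      (Ideal.span {r | IsIntegralOverIdeal J r}).map (C : S →+* MvPolynomial τ S) := by
  apply le_antisymm
  · rw [Ideal.span_le]
    intro f hf
    rw [SetLike.mem_coe, mem_map_C_iff]
    exact fun d => Ideal.subset_span (IsIntegralOverIdeal.coeff hf d)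
  · rw [Ideal.map_span, Ideal.span_le]
    rintro _ ⟨r, hr, rfl⟩
    exact Ideal.subset_span (IsIntegralOverIdeal.map C hr)

theorem radical_span_isIntegralOverIdeal {A : Type*} [CommRing A] (I : Ideal A) :
    (Ideal.span {r | IsIntegralOverIdeal I r}).radical = I.radical := by
  apply le_antisymm
  · rw [Ideal.radical_le_radical_iff, Ideal.span_le]
    exact fun r hr => IsIntegralOverIdeal.mem_radical hr
  · exact Ideal.radical_mono fun r hr => Ideal.subset_span (IsIntegralOverIdeal.of_mem hr)

/-- The ideal generated by the elements integral over `I` is compatible with ring isomorphisms. -/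
theorem comap_span_isIntegralOverIdeal {A B : Type*} [CommRing A] [CommRing B] (e : A ≃+* B)
    (I : Ideal A) :
    Ideal.span {r | IsIntegralOverIdeal I r} =
      (Ideal.span {r | IsIntegralOverIdeal (I.map (e : A →+* B)) r}).comap (e : A →+* B) := by
  have hI : (I.map (e : A →+* B)).map (e.symm : B →+* A) = I := by
    rw [Ideal.map_map]; simp
  apply le_antisymm
  · rw [Ideal.span_le]
    exact fun r hr => Ideal.subset_span (IsIntegralOverIdeal.map (e : A →+* B) hr)
  · have h : Ideal.span {r | IsIntegralOverIdeal (I.map (e : A →+* B)) r} ≤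
        (Ideal.span {r | IsIntegralOverIdeal I r}).comap (e.symm : B →+* A) := by
      rw [Ideal.span_le]
      intro r hr
      refine Ideal.subset_span ?_
      have := IsIntegralOverIdeal.map (e.symm : B →+* A) hr
      rwa [hI] at this
    intro r hr
    simpa using h hr

/-! ### Monomial ideals with a single associated prime -/

theorem isMaximal_radical_of_X_mem {ι K : Type*} [Field K] (J : Ideal (MvPolynomial ι K))
    (hJ : J ≠ ⊤) (hX : ∀ i, X i ∈ J.radical) : J.radical.IsMaximal := by
  have hmax : (RingHom.ker (constantCoeff : MvPolynomial ι K →+* K)).IsMaximal :=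
    RingHom.ker_isMaximal_of_surjective _ fun k => ⟨C k, constantCoeff_C _ k⟩
  have hle : RingHom.ker (constantCoeff : MvPolynomial ι K →+* K) ≤ J.radical := by
    have hvars : idealOfVars ι K ≤ J.radical := by
      rw [idealOfVars, Ideal.span_le]
      rintro _ ⟨i, rfl⟩
      exact hX i
    refine fun f hf => hvars ?_
    rw [← pow_one (idealOfVars ι K), mem_pow_idealOfVars_iff']
    intro d hd
    rw [Nat.lt_one_iff, Finsupp.degree_eq_zero_iff] at hd
    subst hd
    exact hf
  rwa [← hmax.eq_of_le (by rwa [Ne, Ideal.radical_eq_top]) hle]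

theorem le_radical_of_associatedPrimes {R : Type*} [CommRing R] [IsNoetherianRing R] {I p : Ideal R}
    (hAss : associatedPrimes R (R ⧸ I) = {p}) : p ≤ I.radical := by
  rw [← Ideal.sInf_minimalPrimes]
  refine le_sInf fun q hq => ?_
  have := Module.associatedPrimes.minimalPrimes_annihilator_subset_associatedPrimes R (R ⧸ I)
  rw [Ideal.annihilator_quotient, hAss] at this
  exact (this hq).ge

theorem mem_of_mul_mem_of_associatedPrimes {R : Type*} [CommRing R] [IsNoetherianRing R]
    {I p : Ideal R} (hAss : associatedPrimes R (R ⧸ I) = {p}) {a b : R} (hab : a * b ∈ I)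
    (hb : b ∉ p) : a ∈ I := by
  by_contra ha
  have h := biUnion_associatedPrimes_eq_zero_divisors R (R ⧸ I)
  rw [hAss] at h
  simp only [Set.mem_singleton_iff, Set.iUnion_iUnion_eq_left] at h
  refine hb ?_
  rw [← SetLike.mem_coe, h]
  refine ⟨Ideal.Quotient.mk I a, by rwa [Ne, Ideal.Quotient.eq_zero_iff_mem], ?_⟩
  rw [Algebra.smul_def, Ideal.Quotient.algebraMap_eq, ← map_mul, Ideal.Quotient.eq_zero_iff_mem,
    mul_comm]
  exact hab

end

open MvPolynomial in
theorem associatedPrimes_integralClosure_of_primary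
    (K : Type*) [Field K] (n : ℕ) (I : Ideal (MvPolynomial (Fin n) K))
    (hmono : ∃ S : Set (Fin n →₀ ℕ),
      I = Ideal.span ((fun d => (monomial d (1 : K) : MvPolynomial (Fin n) K)) '' S))
    (p : Ideal (MvPolynomial (Fin n) K))
    (hAss : associatedPrimes (MvPolynomial (Fin n) K) (MvPolynomial (Fin n) K ⧸ I) = {p})
    (Ibar : Ideal (MvPolynomial (Fin n) K))
    (hIbar : Ibar = Ideal.span {r | IsIntegralOverIdeal I r}) :
    associatedPrimes (MvPolynomial (Fin n) K) (MvPolynomial (Fin n) K ⧸ Ibar) = {p} := by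
  classical
  have hpp : IsAssociatedPrime p (MvPolynomial (Fin n) K ⧸ I) := by
    have : p ∈ associatedPrimes (MvPolynomial (Fin n) K) (MvPolynomial (Fin n) K ⧸ I) := by
      rw [hAss]; rfl
    exact this
  have hp : p.IsPrime := hpp.isPrime
  have hIp : I ≤ p := by
    have := hpp.annihilator_le
    rwa [Submodule.annihilator_top, Ideal.annihilator_quotient] at this
  have hprad : p = I.radical :=
    le_antisymm (le_radical_of_associatedPrimes hAss) (hp.radical_le_iff.2 hIp)
  -- `ι` indexes the variables in `p`, and `τ` the others
  let τ := {i : Fin n // X i ∉ p}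
  let ι := {i : Fin n // ¬ X i ∉ p}
  let e : MvPolynomial (Fin n) K ≃+* MvPolynomial τ (MvPolynomial ι K) :=
    ((renameEquiv K (Equiv.sumCompl (fun i : Fin n => X i ∉ p)).symm).trans
      (sumAlgEquiv K τ ι)).toRingEquiv
  have he : ∀ i : ι, e (X (i : Fin n)) = C (X i) := by
    intro i
    have : (Equiv.sumCompl (fun i : Fin n => X i ∉ p)).symm (i : Fin n) = Sum.inr i :=
      Equiv.sumCompl_symm_apply_of_neg (p := fun i : Fin n => X i ∉ p) i.2
    simp [e, this]
  let J : Ideal (MvPolynomial ι K) :=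
    (I.map (e : MvPolynomial (Fin n) K →+* MvPolynomial τ (MvPolynomial ι K))).comap C
  have hmemI : ∀ x, e x ∈ I.map (e : MvPolynomial (Fin n) K →+* MvPolynomial τ (MvPolynomial ι K)) ↔ x ∈ I := by
    intro x
    refine ⟨fun h => ?_, fun h => Ideal.mem_map_of_mem (e : MvPolynomial (Fin n) K →+* MvPolynomial τ (MvPolynomial ι K)) h⟩
    obtain ⟨y, hy, hxy⟩ := (Ideal.mem_map_iff_of_surjective
      (e : MvPolynomial (Fin n) K →+* MvPolynomial τ (MvPolynomial ι K)) e.surjective).1 h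
    rwa [← e.injective hxy]
  have hJI : I.map (e : MvPolynomial (Fin n) K →+* MvPolynomial τ (MvPolynomial ι K)) = J.map C := by
    refine le_antisymm ?_ Ideal.map_comap_le
    obtain ⟨S, hS⟩ := hmono
    conv_lhs => rw [hS]
    rw [Ideal.map_span, Ideal.span_le]
    rintro _ ⟨_, ⟨d, hd, rfl⟩, rfl⟩
    have hdI : monomial d (1 : K) ∈ I := hS ▸ Ideal.subset_span ⟨d, hd, rfl⟩
    -- the first factor lies in `S`, the second one is outside `p`, hence can be cancelled modulo `I`
    have hfac : monomial d (1 : K) = (∏ i : Fin n with ¬ X i ∉ p, X i ^ d i) *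
        ∏ i : Fin n with X i ∉ p, X i ^ d i := by
      rw [mul_comm, Finset.prod_filter_mul_prod_filter_not, monomial_eq, C_1, one_mul,
        Finsupp.prod_fintype _ _ (by simp)]
    have hunit : (∏ i : Fin n with X i ∉ p, X i ^ d i : MvPolynomial (Fin n) K) ∉ p := by
      rw [hp.prod_mem_iff]
      rintro ⟨i, hi, hip⟩
      exact (Finset.mem_filter.1 hi).2 (hp.mem_of_pow_mem _ hip)
    rw [hfac] at hdI
    have hfst := mem_of_mul_mem_of_associatedPrimes hAss hdI hunit
    have hrange : e (∏ i : Fin n with ¬ X i ∉ p, X i ^ d i) ∈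
        (C : MvPolynomial ι K →+* MvPolynomial τ (MvPolynomial ι K)).range := by
      rw [map_prod]
      refine Subring.prod_mem _ fun i hi => ?_
      rw [map_pow]
      refine Subring.pow_mem _ ?_ _
      exact ⟨_, (he ⟨i, (Finset.mem_filter.1 hi).2⟩).symm⟩
    obtain ⟨b, hb⟩ := hrange
    have hbJ : b ∈ J := by
      rw [Ideal.mem_comap, hb]
      exact (hmemI _).2 hfst
    simp only [RingHom.coe_coe, SetLike.mem_coe]
    rw [hfac, map_mul, ← hb]
    exact Ideal.mul_mem_right _ _ (Ideal.mem_map_of_mem _ hbJ)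
  have hJtop : J ≠ ⊤ := by
    intro h
    have h1 : (1 : MvPolynomial ι K) ∈ J := h ▸ Submodule.mem_top
    rw [Ideal.mem_comap, C_1, ← map_one e, hmemI] at h1
    exact hp.ne_top ((Ideal.eq_top_iff_one _).2 (hIp h1))
  have hJmax : J.radical.IsMaximal := by
    refine isMaximal_radical_of_X_mem J hJtop fun i => ?_
    have hi : X (i : Fin n) ∈ I.radical := hprad ▸ not_not.1 i.2
    obtain ⟨k, hk⟩ := hi
    refine ⟨k, ?_⟩
    rw [Ideal.mem_comap, map_pow, ← he, ← map_pow, hmemI]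
    exact hk
  have hprim : Ibar.IsPrimary := by
    rw [hIbar, comap_span_isIntegralOverIdeal e, hJI, span_isIntegralOverIdeal_map_C]
    refine Ideal.IsPrimary.comap (isPrimary_map_C _ ?_) _
    rwa [radical_span_isIntegralOverIdeal]
  rw [associatedPrimes.eq_singleton_of_isPrimary hprim, hIbar, radical_span_isIntegralOverIdeal,
    hprad]
end

section
/- Let K be a field, R = K[x_1, …, x_n] with n ≥ 2, and t ≥ 1 an integer. Let M_{n,t} ⊆ R be the ideal generated by the n monomials x^{e_i} = ∏_{j ≠ i} x_j^t (i = 1,…,n), and let I_{n−1;n} ⊆ R be the ideal generated by the n squarefree monomials ∏_{j ≠ i} x_j (i = 1,…,n). Then the integral closure of M_{n,t} equals I_{n−1;n}^t: an element r ∈ R is integral over M_{n,t} if and only if r ∈ I_{n−1;n}^t. -/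
/-- The determinant trick: if `r` multiplies a nonzero finitely generated ideal `N` into `M * N`,
then `r` is integral over `M`. -/
lemma isIntegralOverIdeal_of_mul_mem {R : Type*} [CommRing R] [IsDomain R] (M N : Ideal R)
    (hfg : N.FG) (hN : N ≠ ⊥) {r : R} (h : ∀ v ∈ N, r * v ∈ M * N) :
    IsIntegralOverIdeal M r := by
  have : Module.Finite R N := Module.Finite.of_fg hfg
  obtain ⟨p, hp, -, hc, h0⟩ :=
    LinearMap.exists_monic_and_natDegree_eq_and_coeff_mem_pow_and_aeval_eq_zero R
      (algebraMap R (Module.End R N) r) M (by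
        rintro _ ⟨v, rfl⟩
        rw [Submodule.mem_smul_top_iff]
        simpa using h v v.2)
  obtain ⟨v, hvN, hv⟩ := Submodule.exists_mem_ne_zero_of_ne_bot hN
  have he : p.eval r = 0 := by
    rw [Polynomial.aeval_algebraMap_apply_eq_algebraMap_eval] at h0
    have h1 := congrArg (fun f : Module.End R N => ((f ⟨v, hvN⟩ : N) : R)) h0
    simpa [hv] using h1
  have hpos : 0 < p.natDegree := by
    rcases Nat.eq_zero_or_pos p.natDegree with h1 | h1
    · rw [hp.natDegree_eq_zero.mp h1] at he
      simp at he
    · exact h1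
  refine ⟨p.natDegree, hpos, fun i => p.coeff (p.natDegree - i), fun i hi => ?_, ?_⟩
  · rw [Finset.mem_Icc] at hi
    have h1 := hc (p.natDegree - i)
    rwa [Nat.sub_sub_self hi.2] at h1
  · rw [Polynomial.eval_eq_sum_range, Finset.sum_range_succ, hp.coeff_natDegree, one_mul,
      add_comm] at he
    rw [← he]
    congr 1
    refine Finset.sum_nbij' (fun i => p.natDegree - i) (fun i => p.natDegree - i) ?_ ?_ ?_ ?_ ?_
    · intro i hi; simp only [Finset.mem_Icc, Finset.mem_range] at *; omega
    · intro i hi; simp only [Finset.mem_Icc, Finset.mem_range] at *; omega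
    · intro i hi; simp only [Finset.mem_Icc] at *; omega
    · intro i hi; simp only [Finset.mem_range] at *; omega
    · intro i hi; rfl

/-- The valuative bound: a `p`-adic lower bound, for `p` prime, on the image of an ideal also holds
for every element integral over that ideal. -/
lemma pow_dvd_of_isIntegralOverIdeal {R A : Type*} [CommRing R] [CommRing A] [IsDomain A]
    (φ : R →+* A) {p : A} (hp : Prime p) {e : ℕ} {M : Ideal R}
    (hM : ∀ x ∈ M, p ^ e ∣ φ x) {r : R} (hr : IsIntegralOverIdeal M r) : p ^ e ∣ φ r := by
  obtain ⟨m, hm, a, ha, heq⟩ := hr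
  have hMi : ∀ i, ∀ x ∈ M ^ i, p ^ (e * i) ∣ φ x := by
    intro i x hx
    have h1 : M ≤ (Ideal.span {p ^ e}).comap φ := fun y hy => by
      rw [Ideal.mem_comap, Ideal.mem_span_singleton]; exact hM y hy
    have h2 := Ideal.le_comap_pow φ i (Ideal.pow_right_mono h1 i hx)
    rwa [Ideal.mem_comap, Ideal.span_singleton_pow, Ideal.mem_span_singleton, ← pow_mul] at h2
  have heq' := congrArg φ heq
  simp only [map_add, map_sum, map_mul, map_pow, map_zero] at heq'
  -- By induction on `k ≤ e`: if `φ r = p ^ k * q` with `k < e`, then `q ^ m` is divisible by `p`.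
  suffices ∀ k ≤ e, p ^ k ∣ φ r from this e le_rfl
  intro k
  induction k with
  | zero => simp
  | succ k ih =>
    intro hk
    obtain ⟨q, hq⟩ := ih (by omega)
    rw [hq] at heq' ⊢
    rw [pow_succ]
    refine mul_dvd_mul_left _ (hp.dvd_of_dvd_pow (n := m) ?_)
    have h1 : p ^ (k * m + 1) ∣ (p ^ k * q) ^ m := by
      rw [eq_neg_of_add_eq_zero_left heq', dvd_neg]
      refine Finset.dvd_sum fun i hi => ?_
      obtain ⟨c, hc⟩ := hMi i (a i) (ha i hi)
      rw [Finset.mem_Icc] at hi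
      rw [hc, mul_pow, ← pow_mul]
      refine Dvd.dvd.trans (pow_dvd_pow p (n := e * i + k * (m - i)) ?_)
        ⟨c * q ^ (m - i), by ring⟩
      obtain ⟨d, rfl⟩ := Nat.exists_eq_add_of_le hi.2
      rw [Nat.add_sub_cancel_left]
      nlinarith
    rw [mul_pow, ← pow_mul, pow_succ] at h1
    exact (mul_dvd_mul_iff_left (pow_ne_zero _ hp.ne_zero)).mp h1

lemma prod_pow_mem_pow_sum {R ι : Type*} [CommRing R] [Fintype ι] (g : ι → R) (c : ι → ℕ) :
    ∏ i, g i ^ c i ∈ Ideal.span (Set.range g) ^ ∑ i, c i := by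
  rw [← Finset.prod_pow_eq_pow_sum]
  exact Ideal.prod_mem_prod fun i _ =>
    Ideal.pow_mem_pow (Ideal.subset_span (Set.mem_range_self i)) _

lemma span_range_pow_le {R ι : Type*} [CommRing R] [Fintype ι] [DecidableEq ι] (g : ι → R) (N : ℕ)
    (J : Ideal R) (h : ∀ c : ι → ℕ, ∑ i, c i = N → ∏ i, g i ^ c i ∈ J) :
    Ideal.span (Set.range g) ^ N ≤ J := by
  unfold Ideal.span
  rw [Submodule.span_pow, Submodule.span_le]
  intro x hx
  obtain ⟨f, rfl⟩ := Set.mem_pow.mp hx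
  choose k hk using fun i => (f i).2
  have h1 : (List.ofFn fun i => (f i : R)).prod =
      ∏ i, g i ^ (Finset.univ.filter fun a => k a = i).card := by
    rw [List.prod_ofFn, ← Finset.prod_fiberwise Finset.univ k]
    refine Finset.prod_congr rfl fun i _ => ?_
    rw [← Finset.prod_const]
    refine Finset.prod_congr rfl fun a ha => ?_
    rw [← hk a, (Finset.mem_filter.mp ha).2]
  rw [h1]
  refine h _ ?_
  rw [← Finset.card_eq_sum_card_fiberwise (fun a _ => Finset.mem_coe.mpr (Finset.mem_univ _))]
  simp

/-- Pigeonhole: `(g_i) ^ (t * n + t) ⊆ (g_i ^ t) * (g_i) ^ (t * n)` for `n` generators. -/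
lemma span_pow_le_span_pow_mul {R : Type*} [CommRing R] {n t : ℕ} (ht : 1 ≤ t) (g : Fin n → R) :
    Ideal.span (Set.range g) ^ (t * n + t) ≤
      Ideal.span (Set.range fun i => g i ^ t) * Ideal.span (Set.range g) ^ (t * n) := by
  refine span_range_pow_le g _ _ fun c hc => ?_
  obtain ⟨i, hi⟩ : ∃ i, t ≤ c i := by
    by_contra! hlt
    have h1 : ∑ i, c i ≤ ∑ _i : Fin n, t := Finset.sum_le_sum fun i _ => (hlt i).le
    simp only [Finset.sum_const, Finset.card_univ, Fintype.card_fin, smul_eq_mul] at h1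
    nlinarith
  have hsplit : c = fun j => (if j = i then t else 0) + (if j = i then c i - t else c j) := by
    funext j
    by_cases hj : j = i
    · subst hj; simp [Nat.add_sub_cancel' hi]
    · simp [hj]
  have hsum : ∑ j, (if j = i then c i - t else c j) = t * n := by
    have h1 := hc
    rw [hsplit, Finset.sum_add_distrib] at h1
    simp only [Finset.sum_ite_eq', Finset.mem_univ, if_true] at h1
    omega
  rw [hsplit]
  simp only [pow_add, Finset.prod_mul_distrib]
  refine Ideal.mul_mem_mul ?_ ?_
  · have h1 : ∏ j, g j ^ (if j = i then t else 0) = g i ^ t := by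
      rw [Finset.prod_eq_single i] <;> simp +contextual
    rw [h1]
    exact Ideal.subset_span ⟨i, rfl⟩
  · rw [← hsum]
    exact prod_pow_mem_pow_sum g _

/-- The substitution `X j ↦ X j * T` for `j ∈ S`, fixing the other variables. The `T`-adic order of
the image of `r` is the order of vanishing of `r` along `X j = 0`, `j ∈ S`. -/
noncomputable def scaleHom (K : Type*) [Field K] {n : ℕ} (S : Finset (Fin n)) :
    MvPolynomial (Fin n) K →+* Polynomial (MvPolynomial (Fin n) K) :=
  MvPolynomial.eval₂Hom (Polynomial.C.comp MvPolynomial.C) fun j =>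
    Polynomial.C (MvPolynomial.X j) * Polynomial.X ^ (if j ∈ S then 1 else 0)

lemma scaleHom_monomial {K : Type*} [Field K] {n : ℕ} (S : Finset (Fin n)) (b : Fin n →₀ ℕ)
    (c : K) : scaleHom K S (MvPolynomial.monomial b c) =
      Polynomial.C (MvPolynomial.monomial b c) * Polynomial.X ^ (∑ j ∈ S, b j) := by
  rw [scaleHom, MvPolynomial.coe_eval₂Hom, MvPolynomial.eval₂_monomial,
    MvPolynomial.monomial_eq (a := c), Finsupp.prod_fintype _ _ (by simp),
    Finsupp.prod_fintype _ _ (by simp)]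
  simp only [mul_pow, Finset.prod_mul_distrib, ← pow_mul, Finset.prod_pow_eq_pow_sum,
    RingHom.comp_apply, map_mul, map_prod, map_pow, mul_assoc]
  simp [ite_mul, Finset.sum_ite_mem]

lemma coeff_coeff_scaleHom {K : Type*} [Field K] {n : ℕ} (S : Finset (Fin n)) (b : Fin n →₀ ℕ)
    (r : MvPolynomial (Fin n) K) :
    ((scaleHom K S r).coeff (∑ j ∈ S, b j)).coeff b = r.coeff b := by
  induction r using MvPolynomial.induction_on' with
  | monomial u a =>
    rw [scaleHom_monomial, Polynomial.coeff_C_mul_X_pow, MvPolynomial.coeff_monomial]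
    by_cases h : u = b
    · subst h; simp
    · split_ifs <;> simp [h]
  | add p q hp hq => simp [hp, hq]

open MvPolynomial in
/-- A monomial satisfying all the inequalities `∑_{j ∈ S} b j ≥ (#S - 1) * t` lies in `I ^ t`. -/
lemma monomial_mem_veronese_pow {K : Type*} [Field K] {n t : ℕ} (hn : 2 ≤ n) (b : Fin n →₀ ℕ)
    (a : K) (hb : ∀ S : Finset (Fin n), (S.card - 1) * t ≤ ∑ j ∈ S, b j) :
    monomial b a ∈ Ideal.span (Set.range fun i : Fin n =>
      ∏ j ∈ Finset.univ.erase i, (X j : MvPolynomial (Fin n) K)) ^ t := by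
  have hdef : ∑ j, (t - b j) ≤ t := by
    have h1 := hb (Finset.univ.filter fun j => b j < t)
    set S := Finset.univ.filter fun j => b j < t with hS
    have h2 : ∑ j, (t - b j) = ∑ j ∈ S, (t - b j) := by
      symm
      refine Finset.sum_subset (Finset.subset_univ _) fun j _ hj => ?_
      have : ¬ b j < t := fun h => hj (by simp [hS, h])
      omega
    have h3 : ∑ j ∈ S, (t - b j) + ∑ j ∈ S, b j = S.card * t := by
      rw [← Finset.sum_add_distrib, ← smul_eq_mul, ← Finset.sum_const]
      refine Finset.sum_congr rfl fun j hj => ?_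
      have := (Finset.mem_filter.mp hj).2
      omega
    have h4 : S.card * t ≤ (S.card - 1) * t + t := by
      rw [← Nat.succ_mul]
      exact Nat.mul_le_mul_right _ (by omega)
    omega
  -- Any single coordinate can absorb the slack `t - ∑ j, (t - b j)`.
  obtain ⟨c, hc, hcb⟩ : ∃ c : Fin n → ℕ, ∑ j, c j = t ∧ ∀ j, t - b j ≤ c j := by
    refine ⟨fun j => (t - b j) + if j = ⟨0, by omega⟩ then t - ∑ j, (t - b j) else 0, ?_,
      fun j => Nat.le_add_right _ _⟩
    rw [Finset.sum_add_distrib]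
    simp only [Finset.sum_ite_eq', Finset.mem_univ, if_true]
    omega
  have hmem := prod_pow_mem_pow_sum (fun i : Fin n =>
      ∏ j ∈ Finset.univ.erase i, (X j : MvPolynomial (Fin n) K)) c
  rw [hc] at hmem
  refine Ideal.mem_of_dvd _ ?_ hmem
  have hprod : ∏ i, (∏ j ∈ Finset.univ.erase i, (X j : MvPolynomial (Fin n) K)) ^ c i =
      ∏ j, X j ^ (t - c j) := by
    simp only [← Finset.prod_pow]
    rw [Finset.prod_comm' (t' := Finset.univ) (s' := fun j => Finset.univ.erase j)
      (by intro x y; simp [eq_comm])]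
    refine Finset.prod_congr rfl fun j _ => ?_
    rw [Finset.prod_pow_eq_pow_sum, ← hc, ← Finset.add_sum_erase _ _ (Finset.mem_univ j),
      Nat.add_sub_cancel_left]
  rw [hprod, monomial_eq, Finsupp.prod_fintype _ _ (by simp)]
  refine Dvd.dvd.mul_left (Finset.prod_dvd_prod_of_dvd _ _ fun j _ => pow_dvd_pow _ ?_) _
  have := hcb j
  omega

open MvPolynomial in
theorem integralClosure_Mnt_eq_veronese_pow
    (K : Type*) [Field K] (n t : ℕ) (hn : 2 ≤ n) (ht : 1 ≤ t)
    (M : Ideal (MvPolynomial (Fin n) K))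
    (hM : M = Ideal.span (Set.range fun i : Fin n =>
      ∏ j ∈ Finset.univ.erase i, (X j : MvPolynomial (Fin n) K) ^ t))
    (I : Ideal (MvPolynomial (Fin n) K))
    (hI : I = Ideal.span (Set.range fun i : Fin n =>
      ∏ j ∈ Finset.univ.erase i, (X j : MvPolynomial (Fin n) K))) :
    ∀ r : MvPolynomial (Fin n) K, IsIntegralOverIdeal M r ↔ r ∈ I ^ t := by
  intro r
  constructor
  · intro hr
    have hdvd : ∀ S : Finset (Fin n),
        (Polynomial.X : Polynomial (MvPolynomial (Fin n) K)) ^ ((S.card - 1) * t) ∣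
          scaleHom K S r := by
      intro S
      refine pow_dvd_of_isIntegralOverIdeal (scaleHom K S) Polynomial.prime_X ?_ hr
      suffices M ≤ (Ideal.span {(Polynomial.X : Polynomial (MvPolynomial (Fin n) K)) ^
          ((S.card - 1) * t)}).comap (scaleHom K S) from fun x hx =>
        Ideal.mem_span_singleton.mp (this hx)
      rw [hM, Ideal.span_le]
      rintro _ ⟨i, rfl⟩
      rw [SetLike.mem_coe, Ideal.mem_comap, Ideal.mem_span_singleton, map_prod]
      refine Dvd.dvd.trans ?_ (Finset.prod_dvd_prod_of_subset (S.erase i) _ _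
        (Finset.erase_subset_erase i (Finset.subset_univ S)))
      have h1 : (Polynomial.X : Polynomial (MvPolynomial (Fin n) K)) ^ ((S.card - 1) * t) ∣
          ∏ _j ∈ S.erase i, Polynomial.X ^ t := by
        rw [Finset.prod_const, ← pow_mul, mul_comm t]
        exact pow_dvd_pow _ (Nat.mul_le_mul_right _ Finset.pred_card_le_card_erase)
      refine h1.trans (Finset.prod_dvd_prod_of_dvd _ _ fun j hj => ?_)
      rw [map_pow]
      refine pow_dvd_pow_of_dvd ?_ t
      simp [scaleHom, Finset.mem_of_mem_erase hj]
    rw [r.as_sum]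
    refine Ideal.sum_mem _ fun b hb => ?_
    rw [hI]
    refine monomial_mem_veronese_pow hn b _ fun S => ?_
    by_contra! hlt
    have h1 := Polynomial.X_pow_dvd_iff.mp (hdvd S) _ hlt
    have h2 := coeff_coeff_scaleHom S b r
    rw [h1, coeff_zero] at h2
    exact mem_support_iff.mp hb h2.symm
  · intro hr
    refine isIntegralOverIdeal_of_mul_mem M (I ^ (t * n)) (IsNoetherian.noetherian _) ?_ ?_
    · refine pow_ne_zero _ fun h0 => ?_
      have h1 : ∏ j ∈ Finset.univ.erase (⟨0, by omega⟩ : Fin n),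
          (X j : MvPolynomial (Fin n) K) ∈ I := hI ▸ Ideal.subset_span ⟨_, rfl⟩
      rw [h0] at h1
      exact Finset.prod_ne_zero_iff.mpr (fun j _ => X_ne_zero j) ((Submodule.mem_bot _).mp h1)
    · intro v hv
      have h1 : r * v ∈ I ^ (t * n + t) := by
        rw [add_comm, pow_add]
        exact Ideal.mul_mem_mul hr hv
      rw [hI] at h1 ⊢
      rw [hM]
      simp only [Finset.prod_pow]
      exact span_pow_le_span_pow_mul ht _ h1
end

section
/- Let K be a field, R = K[x_1, …, x_n] with n ≥ 2, and t ≥ 1 an integer. Then the ideal M_{n,t} generated by the n monomials x^{e_i} = ∏_{j ≠ i} x_j^t is unmixed: every associated prime of the R-module R/M_{n,t} is a minimal prime of M_{n,t} (M_{n,t} has no embedded primes). -/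
/-!
A polynomial lies in `M = M_{n,t}` exactly when no monomial of its support has two distinct
exponents below `t` (`mem_Mnt_iff`); in other words, `M` is the intersection of the primary ideals
`(x_k^t, x_l^t)`, `k ≠ l`. Let `p = (M : f)` be an associated prime. As `f ∉ M`, some monomial of
`f` has its exponents at `k ≠ l` below `t`, and since `(x_k^t, x_l^t)` is `(x_k, x_l)`-primary,
every `g` with `g f ∈ M` lies in `(x_k, x_l)` (`exponent_ne_zero_of_mul`), so `p ≤ (x_k, x_l)`.
A prime `q` with `M ≤ q ≤ p` contains two distinct variables; these lie in `(x_k, x_l)`, hence are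
`x_k` and `x_l`, and therefore `p ≤ (x_k, x_l) ≤ q`.
-/

open MvPolynomial in
theorem exists_coeff_eq_ite {σ K : Type*} [CommSemiring K] (f : MvPolynomial σ K)
    (P : (σ →₀ ℕ) → Prop) [DecidablePred P] :
    ∃ f₀ : MvPolynomial σ K, ∀ m, coeff m f₀ = if P m then coeff m f else 0 := by
  classical
  refine ⟨∑ m ∈ f.support with P m, monomial m (coeff m f), fun m => ?_⟩
  simp only [coeff_sum, coeff_monomial, Finset.sum_ite_eq', Finset.mem_filter, mem_support_iff]
  by_cases h : coeff m f = 0 <;> simp [h]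

open MvPolynomial in
theorem mem_Mnt_iff {K : Type*} [Field K] {n t : ℕ} (hn : 2 ≤ n) (f : MvPolynomial (Fin n) K) :
    f ∈ Ideal.span (Set.range fun i : Fin n =>
      ∏ j ∈ Finset.univ.erase i, (X j : MvPolynomial (Fin n) K) ^ t) ↔
    ∀ m ∈ f.support, ∀ k l : Fin n, k ≠ l → t ≤ m k ∨ t ≤ m l := by
  have hgen : (Set.range fun i : Fin n =>
      ∏ j ∈ Finset.univ.erase i, (X j : MvPolynomial (Fin n) K) ^ t) =
      (fun s => monomial s (1 : K)) '' (Set.range fun i : Fin n =>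
        ∑ j ∈ Finset.univ.erase i, Finsupp.single j t) := by
    rw [← Set.range_comp]
    congr 1
    funext i
    simp [monomial_sum_one, X_pow_eq_monomial]
  rw [hgen, mem_ideal_span_monomial_image]
  refine forall₂_congr fun m _ => ?_
  have hle : ∀ i : Fin n, (∑ j ∈ Finset.univ.erase i, Finsupp.single j t ≤ m) ↔
      ∀ j, j ≠ i → t ≤ m j := by
    intro i
    rw [Finsupp.le_def]
    refine forall_congr' fun j => ?_
    simp only [Finsupp.finsetSum_apply, Finsupp.single_apply, Finset.sum_ite_eq',
      Finset.mem_erase, Finset.mem_univ, and_true]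
    by_cases h : j = i <;> simp [h]
  simp only [Set.exists_range_iff, hle]
  constructor
  · rintro ⟨i, hi⟩ k l hkl
    by_cases h : k = i
    · exact Or.inr (hi l fun h' => hkl (h.trans h'.symm))
    · exact Or.inl (hi k h)
  · intro h
    by_cases hall : ∀ j, t ≤ m j
    · exact ⟨⟨0, by omega⟩, fun j _ => hall j⟩
    · push Not at hall
      obtain ⟨i, hi⟩ := hall
      exact ⟨i, fun j hj => (h j i hj).resolve_right (by omega)⟩

open MvPolynomial in
/-- The ideal `(x_k^t, x_l^t)` is `(x_k, x_l)`-primary, in terms of exponents: if `f` is not in it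
but `g * f` is, then `g` lies in `(x_k, x_l)`. -/
theorem exponent_ne_zero_of_mul {σ K : Type*} [Field K] {t : ℕ} {k l : σ}
    {f g : MvPolynomial σ K} (hf : ∃ m ∈ f.support, m k < t ∧ m l < t)
    (hgf : ∀ m ∈ (g * f).support, t ≤ m k ∨ t ≤ m l) :
    ∀ b ∈ g.support, b k ≠ 0 ∨ b l ≠ 0 := by
  classical
  by_contra! hb
  obtain ⟨b, hb, hbk, hbl⟩ := hb
  -- Among the monomials of `f` outside `(x_k^t, x_l^t)`, let `a` have minimal degree in `x_k, x_l`.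
  obtain ⟨a, ha, hmin⟩ := Finset.exists_min_image
    (f.support.filter fun m => m k < t ∧ m l < t) (fun m => m k + m l)
    (by obtain ⟨m, hm, h⟩ := hf; exact ⟨m, by simpa using ⟨mem_support_iff.mp hm, h⟩⟩)
  simp only [Finset.mem_filter] at ha hmin
  -- The lowest parts `f₀` and `g₀` multiply to the lowest part of `g * f`, which is then nonzero.
  obtain ⟨f₀, hf₀⟩ := exists_coeff_eq_ite f
    fun m => m k < t ∧ m l < t ∧ m k + m l = a k + a l
  obtain ⟨g₀, hg₀⟩ := exists_coeff_eq_ite g fun m => m k = 0 ∧ m l = 0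
  have hf₀ne : f₀ ≠ 0 := by
    intro h
    have := hf₀ a
    rw [if_pos ⟨ha.2.1, ha.2.2, rfl⟩, h, coeff_zero] at this
    exact mem_support_iff.mp ha.1 this.symm
  have hg₀ne : g₀ ≠ 0 := by
    intro h
    have := hg₀ b
    rw [if_pos ⟨hbk, hbl⟩, h, coeff_zero] at this
    exact mem_support_iff.mp hb this.symm
  obtain ⟨m, hm⟩ := ne_zero_iff.mp (mul_ne_zero hg₀ne hf₀ne)
  have hmw : m k < t ∧ m l < t ∧ m k + m l = a k + a l := by
    rw [coeff_mul] at hm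
    obtain ⟨⟨u, v⟩, huv, hne⟩ := Finset.exists_ne_zero_of_sum_ne_zero hm
    rw [Finset.HasAntidiagonal.mem_antidiagonal] at huv
    simp only [hg₀, hf₀] at hne
    have hu := (ite_ne_right_iff.mp (left_ne_zero_of_mul hne)).1
    have hv := (ite_ne_right_iff.mp (right_ne_zero_of_mul hne)).1
    have hk := DFunLike.congr_fun huv k
    have hl := DFunLike.congr_fun huv l
    simp only [Finsupp.add_apply] at hk hl
    omega
  have hcoeff : coeff m (g * f) = coeff m (g₀ * f₀) := by
    rw [coeff_mul, coeff_mul]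
    refine Finset.sum_congr rfl fun ⟨u, v⟩ huv => ?_
    rw [Finset.HasAntidiagonal.mem_antidiagonal] at huv
    have hk := DFunLike.congr_fun huv k
    have hl := DFunLike.congr_fun huv l
    simp only [Finsupp.add_apply] at hk hl
    simp only [hg₀, hf₀]
    by_cases hv : coeff v f = 0
    · simp [hv]
    · have := hmin v ⟨mem_support_iff.mpr hv, by omega, by omega⟩
      rw [if_pos (by omega), if_pos (by omega)]
  have := hgf m (mem_support_iff.mpr (hcoeff ▸ hm))
  omega

open MvPolynomial in
theorem exists_two_X_mem {K : Type*} [Field K] {n t : ℕ} (hn : 2 ≤ n)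
    {q : Ideal (MvPolynomial (Fin n) K)} [hq : q.IsPrime]
    (h : Ideal.span (Set.range fun i : Fin n =>
      ∏ j ∈ Finset.univ.erase i, (X j : MvPolynomial (Fin n) K) ^ t) ≤ q) :
    ∃ i j : Fin n, i ≠ j ∧ X i ∈ q ∧ X j ∈ q := by
  have key : ∀ i : Fin n, ∃ j, j ≠ i ∧ X j ∈ q := by
    intro i
    obtain ⟨j, hj, hjq⟩ := hq.prod_mem_iff.mp (h (Ideal.subset_span ⟨i, rfl⟩))
    exact ⟨j, Finset.ne_of_mem_erase hj, hq.mem_of_pow_mem _ hjq⟩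
  obtain ⟨i, -, hi⟩ := key ⟨0, by omega⟩
  obtain ⟨j, hji, hj⟩ := key i
  exact ⟨i, j, hji.symm, hi, hj⟩

open MvPolynomial in
theorem Mnt_unmixed (K : Type*) [Field K] (n t : ℕ) (hn : 2 ≤ n) (ht : 1 ≤ t)
    (M : Ideal (MvPolynomial (Fin n) K))
    (hM : M = Ideal.span (Set.range fun i : Fin n =>
      ∏ j ∈ Finset.univ.erase i, (X j : MvPolynomial (Fin n) K) ^ t)) :
    ∀ p ∈ associatedPrimes (MvPolynomial (Fin n) K) (MvPolynomial (Fin n) K ⧸ M),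
      p ∈ M.minimalPrimes := by
  intro p hp
  obtain ⟨hpp, y, hy⟩ := isAssociatedPrime_iff.mp (AssociatedPrimes.mem_iff.mp hp)
  obtain ⟨f, rfl⟩ := Ideal.Quotient.mk_surjective y
  have hpf : ∀ g, g ∈ p ↔ g * f ∈ M := by
    intro g
    rw [hy, Submodule.mem_colon_singleton, Submodule.mem_bot, ← Ideal.Quotient.eq_zero_iff_mem]
    rfl
  have hMp : M ≤ p := fun g hg => (hpf g).mpr (M.mul_mem_right f hg)
  have hfM : f ∉ M := fun h => hpp.ne_top ((Ideal.eq_top_iff_one p).mpr ((hpf 1).mpr (by simpa)))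
  rw [hM, mem_Mnt_iff hn] at hfM
  push Not at hfM
  obtain ⟨m, hm, k, l, hkl, hmk, hml⟩ := hfM
  have hple : ∀ g ∈ p, ∀ b ∈ g.support, b k ≠ 0 ∨ b l ≠ 0 := fun g hg =>
    exponent_ne_zero_of_mul ⟨m, hm, hmk, hml⟩ fun b hb =>
      (mem_Mnt_iff hn _).mp (hM ▸ (hpf g).mp hg) b hb k l hkl
  have hX : ∀ i, (X i : MvPolynomial (Fin n) K) ∈ p → i = k ∨ i = l := by
    intro i hi
    simpa [support_X, Finsupp.single_apply] using hple _ hi (Finsupp.single i 1) (by simp [support_X])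
  refine ⟨⟨hpp, hMp⟩, fun q ⟨hq, hMq⟩ hqp => ?_⟩
  obtain ⟨i, j, hij, hi, hj⟩ := exists_two_X_mem hn (hM ▸ hMq)
  have hklq : (X k : MvPolynomial (Fin n) K) ∈ q ∧ (X l : MvPolynomial (Fin n) K) ∈ q := by
    rcases hX i (hqp hi) with rfl | rfl <;> rcases hX j (hqp hj) with rfl | rfl
    · exact absurd rfl hij
    · exact ⟨hi, hj⟩
    · exact ⟨hj, hi⟩
    · exact absurd rfl hij
  intro g hg
  have hgspan : g ∈ Ideal.span (X '' {k, l} : Set (MvPolynomial (Fin n) K)) := by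
    rw [mem_ideal_span_X_image]
    simpa using hple g hg
  refine Ideal.span_le.mpr ?_ hgspan
  rintro _ ⟨i, rfl | rfl, rfl⟩
  exacts [hklq.1, hklq.2]
end

section
/- Let K be a field, R = K[x_1, …, x_n] with n ≥ 3, and let I_{n−1;n} ⊆ R be the ideal generated by the n squarefree monomials ∏_{j ≠ i} x_j (i = 1,…,n). Then for every integer t ≥ n−1, the ideal I_{n−1;n}^t (which is the integral closure of M_{n,t}) has an embedded prime: the maximal ideal m = (x_1, …, x_n) is an associated prime of R/I_{n−1;n}^t but is not a minimal prime of I_{n−1;n}^t. -/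
/-!
Write `g i = ∏_{j ≠ i} X j`. A product `∏ g i ^ a i` with `∑ a i = t` is the monomial
`∏ X j ^ (t - a j)`, so `I ^ t` is the monomial ideal generated by the monomials with exponents
`t - a j`, where `a` runs over the tuples of natural numbers of sum `t`.

Since `n ≤ t + 1`, there is a tuple `c` with `1 ≤ c j ≤ t` for all `j` and `∑ c j = t + 1`. Put
`u = ∏ X j ^ (t - c j)`. A generator dividing `u` would give `a ≥ c` with `∑ a j = t < ∑ c j`, so
`u ∉ I ^ t`; whereas `X i * u` is the generator obtained from `a = c - e_i`. Hence `(I ^ t : u)` is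
a proper ideal containing the maximal ideal `m`, that is, it equals `m`.

Every `g i` is divisible by `X 0` or `X 1`, so `I ^ t` lies in the prime `(X 0, X 1)`, realised
as the kernel of the substitution `X 0, X 1 ↦ 0`. It is strictly contained in `m` because
`n ≥ 3`, so `m` is not a minimal prime of `I ^ t`.
-/

namespace VeroneseAux

open MvPolynomial

/-- The exponents of the products `∏ g i ^ a i` with `∑ a i = t`: the vectors `b = t - a`, written
without truncated subtraction. -/
def genExponents (n t : ℕ) : Set (Fin n →₀ ℕ) :=
  {b | ∃ a : Fin n → ℕ, ∑ j, a j = t ∧ ∀ j, b j + a j = t}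

lemma prod_erase_eq_monomial (K : Type*) [Field K] (n : ℕ) (i : Fin n) :
    ∏ j ∈ Finset.univ.erase i, (X j : MvPolynomial (Fin n) K) =
      monomial (∑ j ∈ Finset.univ.erase i, Finsupp.single j 1) 1 := by
  rw [monomial_sum_one]
  rfl

lemma pow_le_span_genExponents (K : Type*) [Field K] (n t : ℕ) :
    Ideal.span (Set.range fun i : Fin n =>
      ∏ j ∈ Finset.univ.erase i, (X j : MvPolynomial (Fin n) K)) ^ t ≤
    Ideal.span ((fun s => monomial s (1 : K)) '' genExponents n t) := by
  induction t with
  | zero =>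
    rw [pow_zero, Ideal.one_eq_top, top_le_iff, Ideal.eq_top_iff_one]
    exact Ideal.subset_span ⟨0, ⟨0, by simp, by simp⟩, rfl⟩
  | succ t ih =>
    rw [pow_succ]
    refine (Ideal.mul_mono_left ih).trans ?_
    rw [Ideal.span_mul_span, Ideal.span_le]
    rintro _ ⟨_, ⟨b, ⟨a, ha, hb⟩, rfl⟩, _, ⟨i, rfl⟩, rfl⟩
    refine Ideal.subset_span
      ⟨b + ∑ j ∈ Finset.univ.erase i, Finsupp.single j 1, ⟨a + Pi.single i 1, ?_, ?_⟩, ?_⟩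
    · simp [Finset.sum_add_distrib, ha]
    · intro j
      have := hb j
      by_cases h : j = i
      · subst h
        simp [Finsupp.single_apply]
        omega
      · simp [Finsupp.single_apply, h]
        omega
    · simp only [prod_erase_eq_monomial, monomial_mul, one_mul]

lemma monomial_mem_pow (K : Type*) [Field K] (n t : ℕ) (b : Fin n →₀ ℕ)
    (hb : b ∈ genExponents n t) :
    monomial b (1 : K) ∈ Ideal.span (Set.range fun i : Fin n =>
      ∏ j ∈ Finset.univ.erase i, (X j : MvPolynomial (Fin n) K)) ^ t := by
  obtain ⟨a, ha, hb⟩ := hb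
  have key : monomial b (1 : K) =
      ∏ i, (∏ j ∈ Finset.univ.erase i, (X j : MvPolynomial (Fin n) K)) ^ a i := by
    simp_rw [← Finset.prod_pow]
    rw [Finset.prod_comm' (t' := Finset.univ) (s' := fun j => Finset.univ.erase j)
      (by intro x y; simp [eq_comm])]
    simp_rw [Finset.prod_pow_eq_pow_sum]
    rw [monomial_eq, Finsupp.prod_fintype _ _ (by simp), C_1, one_mul]
    refine Finset.prod_congr rfl fun j _ => ?_
    congr 1
    have h1 := Finset.add_sum_erase Finset.univ a (Finset.mem_univ j)
    have h2 := hb j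
    omega
  rw [key, ← ha, ← Finset.prod_pow_eq_pow_sum]
  exact Ideal.prod_mem_prod fun i _ =>
    Ideal.pow_mem_pow (Ideal.subset_span (Set.mem_range_self i)) _

lemma span_range_X_eq_ker (K : Type*) [Field K] (n : ℕ) :
    Ideal.span (Set.range (X : Fin n → MvPolynomial (Fin n) K)) =
      RingHom.ker (constantCoeff : MvPolynomial (Fin n) K →+* K) := by
  ext p
  rw [← Set.image_univ, mem_ideal_span_X_image, RingHom.mem_ker, constantCoeff_eq]
  constructor
  · intro h
    by_contra h0
    obtain ⟨i, -, hi⟩ := h 0 (mem_support_iff.2 h0)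
    exact hi rfl
  · intro h m hm
    by_contra! h0
    have : m = 0 := Finsupp.ext fun i => h0 i trivial
    subst this
    exact mem_support_iff.1 hm h

lemma mem_associatedPrimes_pow (K : Type*) [Field K] (n t : ℕ) (hn : 3 ≤ n) (ht : n - 1 ≤ t) :
    Ideal.span (Set.range (X : Fin n → MvPolynomial (Fin n) K)) ∈
      associatedPrimes (MvPolynomial (Fin n) K) (MvPolynomial (Fin n) K ⧸
        Ideal.span (Set.range fun i : Fin n =>
          ∏ j ∈ Finset.univ.erase i, (X j : MvPolynomial (Fin n) K)) ^ t) := by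
  set J := Ideal.span (Set.range fun i : Fin n =>
          ∏ j ∈ Finset.univ.erase i, (X j : MvPolynomial (Fin n) K)) ^ t with hJ
  set m := Ideal.span (Set.range (X : Fin n → MvPolynomial (Fin n) K)) with hm
  have hmax : m.IsMaximal := by
    rw [hm, span_range_X_eq_ker]
    exact RingHom.ker_isMaximal_of_surjective _ fun a => ⟨C a, constantCoeff_C _ a⟩
  -- All entries of `c` are `1` except the first, which absorbs the rest of the sum `t + 1`.
  obtain ⟨c, hc1, hct, hcs⟩ : ∃ c : Fin n → ℕ,
      (∀ j, 1 ≤ c j) ∧ (∀ j, c j ≤ t) ∧ ∑ j, c j = t + 1 := by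
    refine ⟨fun j => 1 + (Pi.single (⟨0, by omega⟩ : Fin n) (t + 1 - n) : Fin n → ℕ) j,
      fun j => Nat.le_add_right _ _, fun j => ?_, ?_⟩
    · simp only [Pi.single_apply]
      split_ifs <;> omega
    · simp [Finset.sum_add_distrib]
      omega
  let b : Fin n →₀ ℕ := Finsupp.equivFunOnFinite.symm fun j => t - c j
  have hb : ∀ j, b j + c j = t := fun j => Nat.sub_add_cancel (hct j)
  have hu : monomial b (1 : K) ∉ J := by
    intro h
    obtain ⟨b', ⟨a, ha, hb'⟩, hle⟩ := mem_ideal_span_monomial_image.1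
      (pow_le_span_genExponents K n t h) b (by simp [mem_support_iff])
    have : ∑ j, c j ≤ ∑ j, a j := Finset.sum_le_sum fun j _ => by
      have h1 := hb j
      have h2 := hb' j
      have h3 := hle j
      omega
    omega
  have hXu : ∀ i, X i * monomial b (1 : K) ∈ J := by
    intro i
    have h : (X i : MvPolynomial (Fin n) K) * monomial b (1 : K) =
        monomial (Finsupp.single i 1 + b) 1 := by
      rw [X, monomial_mul, one_mul]
    rw [h]
    refine monomial_mem_pow K n t _ ⟨fun j => c j - (Pi.single i 1 : Fin n → ℕ) j, ?_, ?_⟩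
    · rw [Finset.sum_tsub_distrib]
      · simp [hcs]
      · intro j _
        have := hc1 j
        simp only [Pi.single_apply]
        split_ifs <;> omega
    · intro j
      have h1 := hc1 j
      have h2 := hb j
      simp only [Finsupp.add_apply, Finsupp.single_apply, Pi.single_apply, eq_comm (a := i)]
      split_ifs <;> omega
  have hcolon : m = (⊥ : Submodule (MvPolynomial (Fin n) K) (MvPolynomial (Fin n) K ⧸ J)).colon
      {Ideal.Quotient.mk J (monomial b 1)} := by
    have hmem : ∀ r, r ∈ (⊥ : Submodule (MvPolynomial (Fin n) K) (MvPolynomial (Fin n) K ⧸ J)).colon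
        {Ideal.Quotient.mk J (monomial b 1)} ↔ r * monomial b 1 ∈ J := by
      intro r
      rw [Submodule.mem_colon_singleton, Submodule.mem_bot, ← Ideal.Quotient.eq_zero_iff_mem,
        map_mul]
      rfl
    refine hmax.eq_of_le ?_ ?_
    · rw [Ne, Ideal.eq_top_iff_one, hmem, one_mul]
      exact hu
    · rw [hm, Ideal.span_le]
      rintro _ ⟨i, rfl⟩
      exact (hmem _).2 (hXu i)
  exact isAssociatedPrime_iff.2 ⟨hmax.isPrime, _, hcolon⟩

lemma notMem_minimalPrimes_pow (K : Type*) [Field K] (n t : ℕ) (hn : 3 ≤ n) (ht : n - 1 ≤ t) :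
    Ideal.span (Set.range (X : Fin n → MvPolynomial (Fin n) K)) ∉
      (Ideal.span (Set.range fun i : Fin n =>
        ∏ j ∈ Finset.univ.erase i, (X j : MvPolynomial (Fin n) K)) ^ t).minimalPrimes := by
  intro h
  let φ : MvPolynomial (Fin n) K →ₐ[K] MvPolynomial (Fin n) K :=
    aeval fun j : Fin n => if j.val < 2 then 0 else X j
  have hφ : ∀ j : Fin n, φ (X j) = if j.val < 2 then 0 else X j := fun j => aeval_X _ j
  have hle : Ideal.span (Set.range fun i : Fin n =>
      ∏ j ∈ Finset.univ.erase i, (X j : MvPolynomial (Fin n) K)) ^ t ≤ RingHom.ker φ := by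
    refine (Ideal.pow_le_self (by omega)).trans (Ideal.span_le.2 ?_)
    rintro _ ⟨i, rfl⟩
    -- One of the two variables sent to `0` survives the removal of `X i`.
    obtain ⟨j, hj, hji⟩ : ∃ j : Fin n, j.val < 2 ∧ j ≠ i := by
      by_cases hi : i.val = 0
      · exact ⟨⟨1, by omega⟩, by simp, fun e => by simp [← e] at hi⟩
      · exact ⟨⟨0, by omega⟩, by simp, fun e => hi (by simp [← e])⟩
    rw [SetLike.mem_coe, RingHom.mem_ker, map_prod]
    exact Finset.prod_eq_zero (Finset.mem_erase.2 ⟨hji, Finset.mem_univ j⟩) (by simp [hφ, hj])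
  have hker : RingHom.ker φ ≤ Ideal.span (Set.range (X : Fin n → MvPolynomial (Fin n) K)) := by
    intro p hp
    rw [span_range_X_eq_ker, RingHom.mem_ker]
    have hcomp : (constantCoeff : MvPolynomial (Fin n) K →+* K).comp (φ : MvPolynomial (Fin n) K →+* MvPolynomial (Fin n) K) =
        constantCoeff := by
      refine MvPolynomial.ringHom_ext (fun r => by simp) fun j => ?_
      simp only [RingHom.comp_apply, RingHom.coe_coe, hφ]
      split_ifs <;> simp
    rw [← hcomp, RingHom.comp_apply, RingHom.coe_coe, RingHom.mem_ker.1 hp, map_zero]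
  have hX := h.2 ⟨RingHom.ker_isPrime φ, hle⟩ hker
    (Ideal.subset_span ⟨(⟨2, by omega⟩ : Fin n), rfl⟩)
  rw [RingHom.mem_ker, hφ] at hX
  simp at hX

end VeroneseAux

open MvPolynomial in
theorem veronese_pow_has_embedded_prime
    (K : Type*) [Field K] (n : ℕ) (hn : 3 ≤ n)
    (I : Ideal (MvPolynomial (Fin n) K))
    (hI : I = Ideal.span (Set.range fun i : Fin n =>
      ∏ j ∈ Finset.univ.erase i, (X j : MvPolynomial (Fin n) K))) :
    ∀ t : ℕ, n - 1 ≤ t →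
      Ideal.span (Set.range (X : Fin n → MvPolynomial (Fin n) K)) ∈
        associatedPrimes (MvPolynomial (Fin n) K) (MvPolynomial (Fin n) K ⧸ I ^ t) ∧
      Ideal.span (Set.range (X : Fin n → MvPolynomial (Fin n) K)) ∉
        (I ^ t).minimalPrimes := by
  subst hI
  exact fun t ht => ⟨VeroneseAux.mem_associatedPrimes_pow K n t hn ht,
    VeroneseAux.notMem_minimalPrimes_pow K n t hn ht⟩
end

section
/- Let K be a field, R = K[x_1, …, x_n] with n ≥ 3, t ≥ 1 an integer, and M = M_{n,t} the ideal generated by the n monomials ∏_{j ≠ i} x_j^t. Then the index of Ass-stability of M equals n−1: for every integer k ≥ n−1 the set of associated primes of R/M^k equals the set of associated primes of R/M^{n−1}, and the set of associated primes of R/M^{n−2} differs from the set of associated primes of R/M^{n−1}. -/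
/-!
For every `k`, the associated primes of `R / M ^ k` are exactly the primes generated by a set `S`
of variables with `2 ≤ #S ≤ k + 1`; since there are `n` variables, these sets stabilize at
`k = n - 1`, and the maximal ideal `(x_1, …, x_n)` is missing for `k = n - 2`.

A monomial `x ^ c` lies in `M ^ k` if and only if the deficits `k - ⌊c i / t⌋`, truncated at `0`,
sum to at most `k` (`mem_pow_iff`): up to slack, the deficits are complementary to the
multiplicities of the generators in a product of `k` of them. Equivalently, `M ^ k` is the
intersection of the irreducible monomial ideals `(x_j ^ (t (k + 1 - e j)) : e j > 0)` over all
vectors `e ≤ k` with sum `k + 1`, so that an associated prime is generated by the variables in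
the support of some such `e`, whose size is between `2` and `k + 1` (`exists_eq_varIdeal`). This
uses that a polynomial with a term free of the variables in `S` is a nonzerodivisor modulo
monomial ideals in these variables (`exists_mem_support_mul`), seen by comparing lowest terms.
Conversely, for `S` of such a size there are deficits supported exactly on `S`, at most `k` and
with sum `k + 1`, and the largest monomial with these deficits has annihilator the prime of `S`
(`varIdeal_mem_associatedPrimes`).
-/

open MvPolynomial

/-! ### Primes generated by variables -/

/-- The monomial prime generated by the variables indexed by `S`. -/
noncomputable def varIdeal (K : Type*) [Field K] {n : ℕ} (S : Finset (Fin n)) :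
    Ideal (MvPolynomial (Fin n) K) :=
  Ideal.span (X '' (S : Set (Fin n)))

section VarIdeal

variable {K : Type*} [Field K] {n : ℕ}

lemma mem_varIdeal {S : Finset (Fin n)} {g : MvPolynomial (Fin n) K} :
    g ∈ varIdeal K S ↔ ∀ a ∈ g.support, ∃ i ∈ S, a i ≠ 0 := by
  simp [varIdeal, mem_ideal_span_X_image]

/-- A polynomial `g` outside the prime generated by the variables in `S` is a nonzerodivisor
modulo every monomial ideal generated in the variables of `S`: here `W` is the set of exponents
outside such an ideal, and if `f` has a term with exponent in `W`, so does `g * f`. -/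
lemma exists_mem_support_mul {S : Finset (Fin n)} {g f : MvPolynomial (Fin n) K}
    (W : (Fin n →₀ ℕ) → Prop) (hdown : ∀ a b, W (a + b) → W b)
    (hfree : ∀ a b, (∀ i ∈ S, a i = 0) → W b → W (a + b))
    (hg : g ∉ varIdeal K S) {b : Fin n →₀ ℕ} (hb : b ∈ f.support) (hbW : W b) :
    ∃ c ∈ (g * f).support, W c := by
  classical
  -- Order exponents by their degree in the variables of `S`, breaking ties lexicographically.
  let key : (Fin n →₀ ℕ) → ℕ ×ₗ Lex (Fin n →₀ ℕ) := fun a => toLex (∑ i ∈ S, a i, toLex a)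
  have key_add : ∀ a b, key (a + b) = key a + key b := by
    intro a b
    simp only [key, Finsupp.add_apply, Finset.sum_add_distrib, toLex_add]
    rfl
  have key_inj : Function.Injective key := by
    intro a b h
    simpa [key] using (congrArg (fun x => (ofLex x).2) h)
  rw [mem_varIdeal] at hg
  push Not at hg
  obtain ⟨a, ha, haS⟩ := hg
  obtain ⟨a₀, ha₀, hamin⟩ := Finset.exists_min_image g.support key ⟨a, ha⟩
  obtain ⟨b₀, hb₀, hbmin⟩ := Finset.exists_min_image (f.support.filter W) key
    ⟨b, Finset.mem_filter.2 ⟨hb, hbW⟩⟩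
  rw [Finset.mem_filter] at hb₀
  have ha₀S : ∀ i ∈ S, a₀ i = 0 := by
    have h1 : ∑ i ∈ S, a₀ i ≤ ∑ i ∈ S, a i := by
      have := hamin a ha
      rw [Prod.Lex.le_iff] at this
      rcases this with h | h
      · exact h.le
      · exact h.1.le
    rw [Finset.sum_eq_zero haS] at h1
    simpa using h1
  have hW : W (a₀ + b₀) := hfree _ _ ha₀S hb₀.2
  refine ⟨a₀ + b₀, ?_, hW⟩
  rw [mem_support_iff, coeff_mul, Finset.sum_eq_single (a₀, b₀)]
  · exact mul_ne_zero (mem_support_iff.1 ha₀) (mem_support_iff.1 hb₀.1)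
  · rintro ⟨a', b'⟩ hmem hne
    rw [Finset.HasAntidiagonal.mem_antidiagonal] at hmem
    by_contra hprod
    have ha' : a' ∈ g.support := mem_support_iff.2 (left_ne_zero_of_mul hprod)
    have hb' : b' ∈ f.support := mem_support_iff.2 (right_ne_zero_of_mul hprod)
    have hWb' : W b' := hdown a' b' (by simpa [hmem] using hW)
    have h1 := hamin a' ha'
    have h2 := hbmin b' (Finset.mem_filter.2 ⟨hb', hWb'⟩)
    have h3 : key a' + key b' = key a₀ + key b₀ := by
      rw [← key_add, ← key_add]; exact congrArg key hmem
    have h4 : key a₀ = key a' := by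
      refine le_antisymm h1 (not_lt.1 fun hlt => ?_)
      exact absurd h3 (add_lt_add_of_lt_of_le hlt h2).ne'
    have h5 : a' = a₀ := (key_inj h4).symm
    subst h5
    exact hne (Prod.ext rfl (add_left_cancel hmem))
  · intro h
    rw [Finset.HasAntidiagonal.mem_antidiagonal] at h
    exact absurd rfl h

lemma varIdeal_isPrime (S : Finset (Fin n)) : (varIdeal K S).IsPrime := by
  refine Ideal.isPrime_iff.2 ⟨fun h => ?_, fun {g f} hgf => ?_⟩
  · have h1 : (1 : MvPolynomial (Fin n) K) ∈ varIdeal K S := h ▸ Submodule.mem_top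
    rw [mem_varIdeal] at h1
    simpa using h1 0 (by simp)
  · by_contra! hcon
    obtain ⟨hg, hf⟩ := hcon
    rw [mem_varIdeal] at hf
    push Not at hf
    obtain ⟨b, hb, hbS⟩ := hf
    obtain ⟨c, hc, hcS⟩ := exists_mem_support_mul (fun c => ∀ i ∈ S, c i = 0)
      (fun a b h i hi => by have := h i hi; simp at this; exact this.2)
      (fun a b ha hb i hi => by simp [ha i hi, hb i hi]) hg hb hbS
    obtain ⟨i, hi, hne⟩ := mem_varIdeal.1 hgf c hc
    exact hne (hcS i hi)

lemma X_mem_varIdeal {S : Finset (Fin n)} {i : Fin n} :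
    (X i : MvPolynomial (Fin n) K) ∈ varIdeal K S ↔ i ∈ S := by
  classical
  rw [mem_varIdeal]
  simp [support_X, Finsupp.single_apply]

lemma varIdeal_injective : Function.Injective (varIdeal K (n := n)) := by
  intro S T h
  ext i
  rw [← X_mem_varIdeal (K := K), h, X_mem_varIdeal]

/-! ### Associated primes of a quotient ring -/

lemma isAssociatedPrime_quotient {R : Type*} [CommRing R] {I P : Ideal R} :
    P ∈ associatedPrimes R (R ⧸ I) ↔
      P.IsPrime ∧ ∃ f : R, ∀ g, g ∈ P ↔ ∃ m : ℕ, g ^ m * f ∈ I := by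
  have key : ∀ f g : R, g ∈ ((⊥ : Submodule R (R ⧸ I)).colon
      {(Ideal.Quotient.mk I f : R ⧸ I)}).radical ↔ ∃ m : ℕ, g ^ m * f ∈ I := by
    intro f g
    rw [Ideal.mem_radical_iff]
    refine exists_congr fun m => ?_
    rw [Submodule.mem_colon_singleton, Submodule.mem_bot, ← Ideal.Quotient.eq_zero_iff_mem]
    rfl
  constructor
  · rintro ⟨hP, x, hx⟩
    obtain ⟨f, rfl⟩ := Ideal.Quotient.mk_surjective x
    exact ⟨hP, f, fun g => by rw [hx, key]⟩
  · rintro ⟨hP, f, hf⟩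
    exact ⟨hP, Ideal.Quotient.mk I f, by ext g; rw [hf, key]⟩

end VarIdeal

/-! ### Powers of the ideal as monomial ideals -/

lemma exists_le_sum_eq {n : ℕ} (d : Fin n → ℕ) (m : ℕ) (hm : m ≤ ∑ i, d i) :
    ∃ e : Fin n → ℕ, (∀ i, e i ≤ d i) ∧ ∑ i, e i = m := by
  induction m with
  | zero => exact ⟨0, by simp, by simp⟩
  | succ m ih =>
    obtain ⟨e, he, hsum⟩ := ih (by omega)
    obtain ⟨i, -, hi⟩ : ∃ i ∈ Finset.univ, e i < d i :=
      Finset.exists_lt_of_sum_lt (by omega)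
    refine ⟨e + Pi.single i 1, fun j => ?_, ?_⟩
    · by_cases hj : j = i
      · subst hj; simpa using hi
      · simpa [hj] using he j
    · simp [Finset.sum_add_distrib, hsum]

section Powers

variable {K : Type*} [Field K] {n : ℕ}

/-- The power `M ^ k` of the ideal generated by the `∏ j ≠ i, x_j ^ t` is the monomial ideal whose
exponents `c` satisfy `∑ i, max (k - ⌊c i / t⌋) 0 ≤ k`. -/
lemma mem_pow_iff {t : ℕ} (ht : 1 ≤ t) (hn : 1 ≤ n) {M : Ideal (MvPolynomial (Fin n) K)}
    (hM : M = Ideal.span (Set.range fun i : Fin n =>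
      ∏ j ∈ Finset.univ.erase i, (X j : MvPolynomial (Fin n) K) ^ t))
    (k : ℕ) (f : MvPolynomial (Fin n) K) :
    f ∈ M ^ k ↔ ∀ c ∈ f.support, ∑ i, (k - c i / t) ≤ k := by
  classical
  have hgen : ∀ i : Fin n, ∏ j ∈ Finset.univ.erase i, (X j : MvPolynomial (Fin n) K) ^ t =
      monomial (Finsupp.equivFunOnFinite.symm fun j => if j = i then 0 else t) 1 := by
    intro i
    rw [monomial_eq, Finsupp.prod_fintype _ _ (by simp),
      ← Finset.mul_prod_erase _ _ (Finset.mem_univ i)]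
    simp only [map_one, one_mul, Finsupp.equivFunOnFinite_symm_apply_apply, if_true, pow_zero]
    exact Finset.prod_congr rfl fun j hj => by simp [Finset.ne_of_mem_erase hj]
  constructor
  · induction k generalizing f with
    | zero => intro _ c _; simp
    | succ k ih =>
      intro hf
      let J : Ideal (MvPolynomial (Fin n) K) := Ideal.span
        ((fun s => monomial s (1 : K)) '' {c | ∑ i, (k + 1 - c i / t) ≤ k + 1})
      suffices h : M ^ (k + 1) ≤ J by
        intro c hc
        obtain ⟨s, hs, hsc⟩ := mem_ideal_span_monomial_image.1 (h hf) c hc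
        refine le_trans (Finset.sum_le_sum fun i _ => ?_) hs
        exact Nat.sub_le_sub_left (Nat.div_le_div_right (hsc i)) _
      rw [pow_succ, Ideal.mul_le]
      intro p hp q hq
      rw [hM] at hq
      induction hq using Submodule.span_induction with
      | zero => simp
      | add x y _ _ hx hy => rw [mul_add]; exact add_mem hx hy
      | smul a x _ hx =>
        rw [smul_eq_mul, mul_left_comm]
        exact Ideal.mul_mem_left _ _ hx
      | mem x hx =>
        obtain ⟨i, rfl⟩ := hx
        simp only [hgen]
        refine mem_ideal_span_monomial_image.2 fun c hc => ⟨c, ?_, le_rfl⟩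
        obtain ⟨a, ha, b, hb, rfl⟩ := Finset.mem_add.1 (support_mul _ _ hc)
        rw [Finset.mem_singleton.1 (support_monomial_subset hb)]
        have hsum := ih p hp a ha
        calc ∑ j, (k + 1 - (a + Finsupp.equivFunOnFinite.symm
                fun j => if j = i then 0 else t : Fin n →₀ ℕ) j / t)
            ≤ ∑ j, ((k - a j / t) + if j = i then 1 else 0) := by
              refine Finset.sum_le_sum fun j _ => ?_
              by_cases hj : j = i
              · simp [hj]; omega
              · simp [hj, Nat.add_div_right _ ht]
          _ ≤ k + 1 := by
              rw [Finset.sum_add_distrib]; simpa using hsum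
  · intro h
    rw [f.as_sum]
    refine Ideal.sum_mem _ fun c hc => ?_
    have hd := h c hc
    -- Raise one of the deficits `k - c i / t` so that they sum to exactly `k`; they are then the
    -- multiplicities of the generators in a product of `k` generators dividing `x ^ c`.
    obtain ⟨b, hdb, hb⟩ : ∃ b : Fin n → ℕ, (∀ i, k - c i / t ≤ b i) ∧ ∑ i, b i = k := by
      refine ⟨(fun i => k - c i / t) + Pi.single ⟨0, hn⟩ (k - ∑ i, (k - c i / t)),
        fun i => by simp, ?_⟩
      simp only [Pi.add_apply, Finset.sum_add_distrib, Finset.sum_pi_single', Finset.mem_univ,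
        if_true]
      omega
    have hprod : (∏ i, (monomial (Finsupp.equivFunOnFinite.symm
        fun j => if j = i then 0 else t) (1 : K)) ^ b i) ∈ M ^ k := by
      rw [← hb, ← Finset.prod_pow_eq_pow_sum]
      refine Ideal.prod_mem_prod fun i _ => Ideal.pow_mem_pow ?_ _
      rw [hM, ← hgen]
      exact Ideal.subset_span ⟨i, rfl⟩
    refine Ideal.mem_of_dvd _ ?_ hprod
    simp only [monomial_pow, one_pow]
    rw [← monomial_sum_one, monomial_dvd_monomial]
    refine ⟨Or.inr fun j => ?_, one_dvd _⟩
    have hsplit : ∑ i, b i * (if j = i then 0 else t) = (k - b j) * t := by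
      have h1 : ∑ i, b i * (if j = i then 0 else t) + b j * t = k * t := by
        rw [← hb, Finset.sum_mul, ← Finset.sum_erase_add _ _ (Finset.mem_univ j),
          ← Finset.sum_erase_add (Finset.univ) (fun i => b i * t) (Finset.mem_univ j)]
        simp only [if_true, mul_zero, add_zero]
        congr 1
        exact Finset.sum_congr rfl fun i hi => by simp [(Finset.ne_of_mem_erase hi).symm]
      rw [Nat.sub_mul]; omega
    simp only [Finsupp.coe_finsetSum, Finset.sum_apply, Finsupp.smul_apply, smul_eq_mul,
      Finsupp.equivFunOnFinite_symm_apply_apply]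
    rw [hsplit]
    calc (k - b j) * t ≤ (c j / t) * t := Nat.mul_le_mul_right _ (tsub_le_iff_tsub_le.1 (hdb j))
      _ ≤ c j := Nat.div_mul_le_self _ _

/-! ### The associated primes of the powers -/

/-- Every associated prime is a monomial prime on between `2` and `k + 1` variables. The ideal is
the intersection of the irreducible ideals `(x_j ^ (t (k + 1 - e j)) : e j > 0)`, where `e` runs
over the vectors with `∑ e = k + 1` and `e ≤ k`, and the support of `e` gives the prime. -/
lemma exists_eq_varIdeal {t k : ℕ} (ht : 1 ≤ t) {I : Ideal (MvPolynomial (Fin n) K)}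
    (hI : ∀ f, f ∈ I ↔ ∀ c ∈ f.support, ∑ i, (k - c i / t) ≤ k)
    {P : Ideal (MvPolynomial (Fin n) K)}
    (hP : P ∈ associatedPrimes _ (MvPolynomial (Fin n) K ⧸ I)) :
    ∃ S : Finset (Fin n), 2 ≤ S.card ∧ S.card ≤ k + 1 ∧ P = varIdeal K S := by
  classical
  obtain ⟨hprime, f, hf⟩ := isAssociatedPrime_quotient.1 hP
  -- `P` lies in the prime of every component that does not contain `f`.
  have hle : ∀ e : Fin n → ℕ, ∑ i, e i = k + 1 → ∀ c ∈ f.support, (∀ i, e i ≤ k - c i / t) →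
      P ≤ varIdeal K (Finset.univ.filter fun i => e i ≠ 0) := by
    intro e he c hc hec g hg
    obtain ⟨m, hm⟩ := (hf g).1 hg
    by_contra hgS
    have hgm : g ^ m ∉ varIdeal K (Finset.univ.filter fun i => e i ≠ 0) := fun h =>
      hgS ((varIdeal_isPrime _).mem_of_pow_mem m h)
    obtain ⟨c', hc', hW⟩ := exists_mem_support_mul (fun c => ∀ i, e i ≤ k - c i / t)
      (fun a b h i => (h i).trans (Nat.sub_le_sub_left (Nat.div_le_div_right (by simp)) _))
      (fun a b ha hb i => by
        by_cases hi : e i = 0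
        · simp [hi]
        · simpa [ha i (by simpa using hi)] using hb i) hgm hc hec
    have h1 := (hI _).1 hm c' hc'
    have h2 := Finset.sum_le_sum fun i (_ : i ∈ Finset.univ) => hW i
    omega
  -- Conversely, `P` contains the prime of one of these components: otherwise each of them involves
  -- a variable outside `P`, and a power of the product of these variables multiplies `f` into `I`.
  obtain ⟨e, he, c, hc, hec, hX⟩ : ∃ e : Fin n → ℕ, ∑ i, e i = k + 1 ∧ ∃ c ∈ f.support,
      (∀ i, e i ≤ k - c i / t) ∧ ∀ i, e i ≠ 0 → (X i : MvPolynomial (Fin n) K) ∈ P := by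
    by_contra! hcon
    let u : Fin n →₀ ℕ := Finsupp.equivFunOnFinite.symm fun j =>
      if (X j : MvPolynomial (Fin n) K) ∈ P then 0 else t * k
    have hu : monomial u (1 : K) ∉ P := by
      rw [monomial_eq, Finsupp.prod_fintype _ _ (by simp), map_one, one_mul,
        hprime.prod_mem_iff]
      rintro ⟨j, -, hj⟩
      by_cases hjP : (X j : MvPolynomial (Fin n) K) ∈ P
      · simp only [u, Finsupp.equivFunOnFinite_symm_apply_apply, hjP, if_true, pow_zero] at hj
        exact hprime.ne_top ((Ideal.eq_top_iff_one _).2 hj)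
      · exact hjP (hprime.mem_of_pow_mem _ hj)
    refine hu ((hf _).2 ⟨1, (hI _).2 fun a ha => ?_⟩)
    rw [pow_one] at ha
    obtain ⟨b, hb, c, hc, rfl⟩ := Finset.mem_add.1 (support_mul _ _ ha)
    rw [Finset.mem_singleton.1 (support_monomial_subset hb)]
    by_contra! hlt
    obtain ⟨e, hle, hsum⟩ := exists_le_sum_eq _ (k + 1) hlt
    obtain ⟨j, hj, hjP⟩ := hcon e hsum c hc fun i => (hle i).trans
      (Nat.sub_le_sub_left (Nat.div_le_div_right (by simp)) _)
    have h1 := hle j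
    have h2 : k ≤ (u + c) j / t := by
      rw [Nat.le_div_iff_mul_le ht]
      simp [u, hjP, mul_comm]
    omega
  refine ⟨Finset.univ.filter fun i => e i ≠ 0, ?_, ?_, le_antisymm (hle e he c hc hec) ?_⟩
  · have h1 : ∑ i ∈ Finset.univ.filter (fun i => e i ≠ 0), e i ≤
        (Finset.univ.filter fun i => e i ≠ 0).card • k :=
      Finset.sum_le_card_nsmul _ _ _ fun i _ => (hec i).trans (Nat.sub_le _ _)
    rw [Finset.sum_filter_ne_zero, he, smul_eq_mul] at h1
    by_contra! hlt
    have : (Finset.univ.filter fun i => e i ≠ 0).card * k ≤ 1 * k :=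
      Nat.mul_le_mul_right _ (by omega)
    omega
  · have h1 : (Finset.univ.filter fun i => e i ≠ 0).card • 1 ≤
        ∑ i ∈ Finset.univ.filter (fun i => e i ≠ 0), e i :=
      Finset.card_nsmul_le_sum _ _ _ fun i hi => by
        have := (Finset.mem_filter.1 hi).2; omega
    rw [Finset.sum_filter_ne_zero, he, smul_eq_mul] at h1
    omega
  · refine Ideal.span_le.2 ?_
    rintro _ ⟨i, hi, rfl⟩
    exact hX i (by simpa using hi)

/-- A monomial prime on between `2` and `k + 1` variables is the annihilator of the class of a
monomial in the quotient. -/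
lemma varIdeal_mem_associatedPrimes {t k : ℕ} (ht : 1 ≤ t) {I : Ideal (MvPolynomial (Fin n) K)}
    (hI : ∀ f, f ∈ I ↔ ∀ c ∈ f.support, ∑ i, (k - c i / t) ≤ k)
    {S : Finset (Fin n)} (h2 : 2 ≤ S.card) (hk : S.card ≤ k + 1) :
    varIdeal K S ∈ associatedPrimes _ (MvPolynomial (Fin n) K ⧸ I) := by
  classical
  obtain ⟨s, hs⟩ : S.Nonempty := Finset.card_pos.1 (by omega)
  -- Deficits on `S`: each is between `1` and `k`, and they sum to `k + 1`.
  obtain ⟨d, hdk, hd1, hd0, hsum⟩ : ∃ d : Fin n → ℕ, (∀ i, d i ≤ k) ∧ (∀ i ∈ S, 1 ≤ d i) ∧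
      (∀ i ∉ S, d i = 0) ∧ ∑ i, d i = k + 1 := by
    refine ⟨fun i => (if i ∈ S then 1 else 0) + if i = s then k + 1 - S.card else 0,
      fun i => ?_, fun i hi => by simp [hi], fun i hi => ?_, ?_⟩
    · dsimp only
      split_ifs <;> omega
    · have : i ≠ s := fun h => hi (h ▸ hs)
      simp [hi, this]
    · rw [Finset.sum_add_distrib]
      simp
      omega
  -- The largest exponent in each variable with these deficits.
  let c : Fin n →₀ ℕ := Finsupp.equivFunOnFinite.symm fun i => t * (k - d i) + (t - 1)
  have hcdiv : ∀ i, c i / t = k - d i := fun i => by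
    simp only [c, Finsupp.equivFunOnFinite_symm_apply_apply]
    rw [Nat.mul_add_div ht, Nat.div_eq_of_lt (by omega), add_zero]
  have hcolon : ∀ g, g * monomial c (1 : K) ∈ I ↔ g ∈ varIdeal K S := by
    intro g
    rw [hI, mem_varIdeal]
    have hsupp : ∀ b, b ∈ (g * monomial c (1 : K)).support ↔ ∃ a ∈ g.support, b = a + c := by
      intro b
      constructor
      · intro hb
        obtain ⟨a, ha, b', hb', rfl⟩ := Finset.mem_add.1 (support_mul _ _ hb)
        exact ⟨a, ha, by rw [Finset.mem_singleton.1 (support_monomial_subset hb')]⟩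
      · rintro ⟨a, ha, rfl⟩
        rw [mem_support_iff, coeff_mul_monomial, mul_one]
        exact mem_support_iff.1 ha
    constructor
    · intro h a ha
      by_contra! hfree
      have h1 := h _ ((hsupp _).2 ⟨a, ha, rfl⟩)
      have h3 : ∑ i, d i ≤ ∑ i, (k - (a + c) i / t) := by
        refine Finset.sum_le_sum fun i _ => ?_
        by_cases hi : i ∈ S
        · have := hcdiv i
          have := hdk i
          rw [Finsupp.add_apply, hfree i hi, zero_add]
          omega
        · simp [hd0 i hi]
      omega
    · intro h b hb
      obtain ⟨a, ha, rfl⟩ := (hsupp b).1 hb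
      obtain ⟨j, hj, hne⟩ := h a ha
      have hlt : ∑ i, (k - (a + c) i / t) < ∑ i, d i := by
        refine Finset.sum_lt_sum (fun i _ => ?_) ⟨j, Finset.mem_univ j, ?_⟩
        · have h3 : c i / t ≤ (a + c) i / t := Nat.div_le_div_right (by simp)
          have := hcdiv i
          omega
        · have h3 : k - d j + 1 ≤ (a + c) j / t := by
            rw [Nat.le_div_iff_mul_le ht]
            simp only [c, Finsupp.add_apply, Finsupp.equivFunOnFinite_symm_apply_apply]
            rw [add_mul, mul_comm t]
            omega
          have := hd1 j hj
          omega
      omega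
  refine isAssociatedPrime_quotient.2 ⟨varIdeal_isPrime S, monomial c 1, fun g => ?_⟩
  simp only [hcolon]
  exact ⟨fun h => ⟨1, by simpa using h⟩,
    fun ⟨m, hm⟩ => (varIdeal_isPrime S).mem_of_pow_mem m hm⟩

end Powers

open MvPolynomial in
theorem astab_Mnt_eq (K : Type*) [Field K] (n t : ℕ) (hn : 3 ≤ n) (ht : 1 ≤ t)
    (M : Ideal (MvPolynomial (Fin n) K))
    (hM : M = Ideal.span (Set.range fun i : Fin n =>
      ∏ j ∈ Finset.univ.erase i, (X j : MvPolynomial (Fin n) K) ^ t)) :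
    (∀ k : ℕ, n - 1 ≤ k →
      associatedPrimes (MvPolynomial (Fin n) K) (MvPolynomial (Fin n) K ⧸ M ^ k) =
        associatedPrimes (MvPolynomial (Fin n) K) (MvPolynomial (Fin n) K ⧸ M ^ (n - 1))) ∧
    associatedPrimes (MvPolynomial (Fin n) K) (MvPolynomial (Fin n) K ⧸ M ^ (n - 2)) ≠
      associatedPrimes (MvPolynomial (Fin n) K) (MvPolynomial (Fin n) K ⧸ M ^ (n - 1)) := by
  have hass : ∀ k P, P ∈ associatedPrimes _ (MvPolynomial (Fin n) K ⧸ M ^ k) ↔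
      ∃ S : Finset (Fin n), 2 ≤ S.card ∧ S.card ≤ k + 1 ∧ P = varIdeal K S := by
    intro k P
    have hI := mem_pow_iff ht (by omega) hM k
    refine ⟨exists_eq_varIdeal ht hI, ?_⟩
    rintro ⟨S, h2, hk, rfl⟩
    exact varIdeal_mem_associatedPrimes ht hI h2 hk
  have hcard : ∀ S : Finset (Fin n), S.card ≤ n := fun S => by simpa using S.card_le_univ
  constructor
  · intro k hk
    ext P
    rw [hass, hass]
    refine exists_congr fun S => ?_
    have := hcard S
    constructor
    · rintro ⟨h2, -, hP⟩
      exact ⟨h2, by omega, hP⟩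
    · rintro ⟨h2, -, hP⟩
      exact ⟨h2, by omega, hP⟩
  · -- The maximal ideal `(x_1, …, x_n)` is associated to `M ^ (n - 1)` but not to `M ^ (n - 2)`.
    intro heq
    have hmem : varIdeal K (Finset.univ : Finset (Fin n)) ∈
        associatedPrimes _ (MvPolynomial (Fin n) K ⧸ M ^ (n - 1)) :=
      (hass _ _).2 ⟨Finset.univ, by simp; omega, by simp; omega, rfl⟩
    rw [← heq, hass] at hmem
    obtain ⟨S, -, hle, hS⟩ := hmem
    rw [← varIdeal_injective hS] at hle
    simp at hle
    omega
end

section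
/- Let n, j, r be integers with 0 ≤ r ≤ j ≤ n−2. Then in the formal power series ring ℤ⟦t⟧: (1 − t)^{n−r} · ∑_{i ≥ 0} C(i(n−j−1) + n−r−1, n−r−1) t^i = ∑_{l ≥ 0} A_{l(n−j−1)}^{n−r, n−j−1} t^l, where C(a,b) is the binomial coefficient and A_i^{m,d} is the coefficient of t^i in the polynomial (1 + t + ⋯ + t^{d−1})^m. -/
/-!
Write `d = n - j - 1` and `m = n - r`, so `d, m ≥ 1`. In `ℤ⟦X⟧`,
`(1 - X ^ d) ^ m * ∑ C(i + m - 1, m - 1) X ^ i = (1 - X ^ d) ^ m / (1 - X) ^ m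
= (1 + X + ⋯ + X ^ (d - 1)) ^ m`.
Now keep only the coefficients whose index is a multiple of `d`. This operation turns
multiplication by `1 - X ^ d` into multiplication by `1 - X` (`katzmanDecimate_one_sub_pow_mul`),
which gives the identity.
-/

/-- `katzmanA m d i` is the coefficient `A_i^{m,d}` of `t^i` in `(1 + t + ⋯ + t^{d-1})^m`. -/
noncomputable def katzmanA (m d i : ℕ) : ℤ :=
  ((∑ s ∈ Finset.range d, (Polynomial.X : Polynomial ℤ) ^ s) ^ m).coeff i

/-- The power series `∑ l, a_{l d} X ^ l` formed from `F = ∑ i, a_i X ^ i`. -/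
noncomputable def katzmanDecimate (d : ℕ) (F : PowerSeries ℤ) : PowerSeries ℤ :=
  PowerSeries.mk fun l => PowerSeries.coeff (l * d) F

theorem katzmanDecimate_one_sub_mul {d : ℕ} (hd : 0 < d) (F : PowerSeries ℤ) :
    katzmanDecimate d ((1 - PowerSeries.X ^ d) * F) =
      (1 - PowerSeries.X) * katzmanDecimate d F := by
  ext l
  rw [sub_mul, sub_mul, one_mul, one_mul, map_sub]
  simp only [katzmanDecimate, PowerSeries.coeff_mk, map_sub, PowerSeries.coeff_X_pow_mul']
  cases l with
  | zero => simp [hd.ne']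
  | succ l => simp [PowerSeries.coeff_succ_X_mul, Nat.succ_mul]

theorem katzmanDecimate_one_sub_pow_mul {d : ℕ} (hd : 0 < d) (m : ℕ) (F : PowerSeries ℤ) :
    katzmanDecimate d ((1 - PowerSeries.X ^ d) ^ m * F) =
      (1 - PowerSeries.X) ^ m * katzmanDecimate d F := by
  induction m with
  | zero => simp
  | succ m ih =>
    rw [pow_succ', mul_assoc, katzmanDecimate_one_sub_mul hd, ih, pow_succ', mul_assoc]

theorem katzman_one_sub_pow_mul_choose (d k : ℕ) :
    (1 - PowerSeries.X ^ d : PowerSeries ℤ) ^ (k + 1) *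
        PowerSeries.mk (fun i => (Nat.choose (k + i) k : ℤ)) =
      (∑ s ∈ Finset.range d, (PowerSeries.X : PowerSeries ℤ) ^ s) ^ (k + 1) := by
  have h := PowerSeries.mk_add_choose_mul_one_sub_pow_eq_one (S := ℤ) (d := k)
  rw [← geom_sum_mul_neg, mul_pow, mul_assoc, mul_comm (_ ^ (k + 1)) (PowerSeries.mk _), h,
    mul_one]

theorem katzman_lemma_2_5 (n j r : ℕ) (hr : r ≤ j) (hj : j ≤ n - 2) (hn : 2 ≤ n) :
    (1 - PowerSeries.X : PowerSeries ℤ) ^ (n - r) *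
        PowerSeries.mk (fun i =>
          (Nat.choose (i * (n - j - 1) + (n - r - 1)) (n - r - 1) : ℤ)) =
      PowerSeries.mk (fun l => katzmanA (n - r) (n - j - 1) (l * (n - j - 1))) := by
  have hd : 0 < n - j - 1 := by omega
  obtain ⟨k, hk⟩ : ∃ k, n - r = k + 1 := ⟨n - r - 1, by omega⟩
  generalize n - j - 1 = d at *
  rw [hk, Nat.add_sub_cancel]
  have h := congrArg (katzmanDecimate d) (katzman_one_sub_pow_mul_choose d k)
  rw [katzmanDecimate_one_sub_pow_mul hd] at h
  have hP : (∑ s ∈ Finset.range d, (PowerSeries.X : PowerSeries ℤ) ^ s) ^ (k + 1) =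
      (((∑ s ∈ Finset.range d, (Polynomial.X : Polynomial ℤ) ^ s) ^ (k + 1) :
        Polynomial ℤ) : PowerSeries ℤ) := by
    rw [← Polynomial.coeToPowerSeries.ringHom_apply]
    simp only [map_pow, map_sum, Polynomial.coeToPowerSeries.ringHom_apply, Polynomial.coe_X]
  rw [hP] at h
  simpa only [katzmanDecimate, katzmanA, PowerSeries.coeff_mk, Polynomial.coeff_coe,
    add_comm k (_ * d)] using h
end

section
/- Let n ≥ 2 be an integer and for i ∈ ℕ let H(i) be the number of tuples (α_1, …, α_n) ∈ ℕ^n with α_1 + ⋯ + α_n = i(n−1) and α_j ≤ i for all j. Then the sequence ((n−1)! · H(i) / i^{n−1})_{i ≥ 1} of real numbers converges, as i → ∞, to ∑_{j=0}^{n−2} (−1)^j · C(n, j) · (n−j−1)^{n−1}; that is, the multiplicity e(M_{n,t}) (equal to (n−1)! times the leading coefficient of the degree-(n−1) Hilbert polynomial of H) equals ∑_{j=0}^{n−2} (−1)^j C(n, j) (n−j−1)^{n−1}. -/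
/-!
The number `hilbertH n i` is the coefficient of `X ^ (i(n-1))` in `(1 + X + ⋯ + X ^ i) ^ n`
(`hilbertH_eq_coeff`). Since `1 + X + ⋯ + X ^ i = (1 - X ^ (i+1)) / (1 - X)`, expanding
`(1 - X ^ (i+1)) ^ n` by the binomial theorem and `(1 - X)⁻ⁿ` as a binomial series gives, for
`i ≥ n - 1 ≥ 1`, the closed formula
`H(i) = ∑_{j ≤ n-2} (-1)^j C(n,j) C((n-1) + (i(n-1) - j(i+1)), n-1)` (`hilbertH_eq_sum`).
The terms with `j ≥ n-1` vanish because then `j(i+1) > i(n-1)`. Each binomial coefficient is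
asymptotic to `((n-1-j) i)^{n-1} / (n-1)!` (`tendsto_choose_div_pow`), whence the limit.
-/

/-- `hilbertH n i` is the number of tuples `(α_1,…,α_n) ∈ ℕ^n` with
`α_1 + ⋯ + α_n = i(n-1)` and `α_j ≤ i` for all `j`. -/
noncomputable def hilbertH (n i : ℕ) : ℕ :=
  Set.ncard {α : Fin n → ℕ | (∑ j, α j = i * (n - 1)) ∧ ∀ j, α j ≤ i}

open PowerSeries in
lemma hilbertH_eq_coeff (n i : ℕ) :
    (hilbertH n i : ℤ) =
      coeff (i * (n - 1)) ((∑ k ∈ Finset.range (i + 1), (X : ℤ⟦X⟧) ^ k) ^ n) := by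
  have hset : {α : Fin n → ℕ | (∑ j, α j = i * (n - 1)) ∧ ∀ j, α j ≤ i} =
      ((Fintype.piFinset fun _ : Fin n => Finset.range (i + 1)).filter
        fun α => i * (n - 1) = ∑ j, α j : Finset (Fin n → ℕ)) := by
    ext α
    simp [Fintype.mem_piFinset, and_comm, eq_comm]
  have hpow : (∑ k ∈ Finset.range (i + 1), (X : ℤ⟦X⟧) ^ k) ^ n =
      ∏ _j : Fin n, ∑ k ∈ Finset.range (i + 1), (X : ℤ⟦X⟧) ^ k := by simp
  rw [hilbertH, hset, Set.ncard_coe_finset, hpow, Finset.prod_univ_sum, map_sum,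
    Finset.card_filter]
  push_cast
  refine Finset.sum_congr rfl fun α _ => ?_
  rw [Finset.prod_pow_eq_pow_sum, coeff_X_pow]

open PowerSeries in
/-- The coefficients of `((1 - X ^ (i+1)) / (1 - X)) ^ (k+1)`, by the binomial theorem and the
binomial series. -/
lemma coeff_geom_pow (k i d : ℕ) :
    coeff d ((∑ l ∈ Finset.range (i + 1), (X : ℤ⟦X⟧) ^ l) ^ (k + 1)) =
      ∑ j ∈ Finset.range (k + 2), if (i + 1) * j ≤ d then
        (-1 : ℤ) ^ j * ((k + 1).choose j : ℤ) * ((k + (d - (i + 1) * j)).choose k : ℤ)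
      else 0 := by
  have hgeom : (∑ l ∈ Finset.range (i + 1), (X : ℤ⟦X⟧) ^ l) ^ (k + 1) =
      (1 - X ^ (i + 1)) ^ (k + 1) * mk fun m => ((k + m).choose k : ℤ) := by
    have h := mk_add_choose_mul_one_sub_pow_eq_one ℤ k
    rw [← geom_sum_mul_neg, mul_pow, mul_assoc, mul_comm ((1 - X : ℤ⟦X⟧) ^ (k + 1)), h, mul_one]
  have hbin : (1 - (X : ℤ⟦X⟧) ^ (i + 1)) ^ (k + 1) =
      ∑ j ∈ Finset.range (k + 2),
        C ((-1 : ℤ) ^ j * ((k + 1).choose j : ℤ)) * X ^ ((i + 1) * j) := by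
    rw [sub_eq_neg_add, add_pow]
    refine Finset.sum_congr rfl fun j _ => ?_
    rw [neg_pow, ← pow_mul]
    simp
    ring
  rw [hgeom, hbin, Finset.sum_mul, map_sum]
  refine Finset.sum_congr rfl fun j _ => ?_
  rw [mul_assoc, coeff_C_mul, coeff_X_pow_mul']
  split_ifs <;> simp

/-- The closed formula for `hilbertH (k+1) i`, valid once `i` is so large that
`j(i+1) ≤ ik` for every `j < k`. -/
lemma hilbertH_eq_sum (k i : ℕ) (hk : 0 < k) (hi : k ≤ i) :
    (hilbertH (k + 1) i : ℤ) = ∑ j ∈ Finset.range k,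
      (-1 : ℤ) ^ j * ((k + 1).choose j : ℤ) * ((k + (i * (k - j) - j)).choose k : ℤ) := by
  rw [hilbertH_eq_coeff, coeff_geom_pow, Finset.sum_range_succ, Finset.sum_range_succ,
    if_neg, if_neg, add_zero, add_zero]
  · refine Finset.sum_congr rfl fun j hj => ?_
    obtain ⟨c, rfl⟩ := Nat.exists_eq_add_of_lt (Finset.mem_range.1 hj)
    have h1 : (i + 1) * j ≤ i * (j + c + 1 + 1 - 1) := by
      rw [Nat.add_sub_cancel]
      nlinarith [Nat.zero_le (i * c)]
    have h2 : i * (j + c + 1 + 1 - 1) - (i + 1) * j = i * (j + c + 1 - j) - j := by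
      rw [Nat.add_sub_cancel, show j + c + 1 - j = c + 1 by omega,
        show i * (j + c + 1) = i * (c + 1) + i * j by ring,
        show (i + 1) * j = j + i * j by ring, Nat.add_sub_add_right]
    rw [if_pos h1, h2]
  · rw [Nat.add_sub_cancel]
    nlinarith
  · rw [Nat.add_sub_cancel]
    nlinarith

open Filter in
/-- `k! C(k + m, k)` lies between `(m+1)^k` and `(m+k)^k`; here `m = ic - j` with `c ≥ 1`. -/
lemma tendsto_choose_div_pow (k c j : ℕ) (hc : 1 ≤ c) :
    Tendsto (fun i : ℕ => (k.factorial : ℝ) * ((k + (i * c - j)).choose k : ℝ) / (i : ℝ) ^ k)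
      atTop (nhds ((c : ℝ) ^ k)) := by
  have hlin : ∀ b : ℝ, Tendsto (fun i : ℕ => (((i : ℝ) * c - j + b) / i) ^ k) atTop
      (nhds ((c : ℝ) ^ k)) := fun b => by
    have h : Tendsto (fun i : ℕ => (c : ℝ) + (b - j) / i) atTop (nhds (c + 0)) :=
      tendsto_const_nhds.add (tendsto_const_div_atTop_nhds_zero_nat _)
    rw [add_zero] at h
    refine (h.congr' ?_).pow k
    filter_upwards [eventually_gt_atTop 0] with i hi
    have : (i : ℝ) ≠ 0 := by positivity
    field_simp
    ring
  refine tendsto_of_tendsto_of_tendsto_of_le_of_le' (hlin 1) (hlin k) ?_ ?_ <;>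
  · filter_upwards [eventually_ge_atTop j] with i hi
    have hle : j ≤ i * c := hi.trans (Nat.le_mul_of_pos_right i hc)
    have hm : (i : ℝ) * c - j = ((i * c - j : ℕ) : ℝ) := by push_cast [hle]; ring
    rw [hm, div_pow]
    generalize i * c - j = m
    gcongr
    rw [← Nat.cast_mul, ← Nat.descFactorial_eq_factorial_mul_choose]
    first
    | have := Nat.pow_sub_le_descFactorial (k + m) k
      rw [show k + m + 1 - k = m + 1 by omega] at this
      exact_mod_cast this
    | have := Nat.descFactorial_le_pow (k + m) k
      rw [add_comm (m : ℝ)]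
      exact_mod_cast this

open Filter in
theorem multiplicity_Mnt (n : ℕ) (hn : 2 ≤ n) :
    Tendsto (fun i : ℕ =>
        ((Nat.factorial (n - 1) : ℝ) * (hilbertH n i : ℝ)) / (i : ℝ) ^ (n - 1))
      atTop
      (nhds (∑ j ∈ Finset.range (n - 1),
        (-1 : ℝ) ^ j * (n.choose j : ℝ) * ((n - j - 1 : ℕ) : ℝ) ^ (n - 1))) := by
  obtain ⟨k, rfl⟩ : ∃ k, n = k + 1 := ⟨n - 1, by omega⟩
  simp only [Nat.add_sub_cancel]
  have hlim := tendsto_finsetSum (Finset.range k) fun j hj =>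
    (tendsto_choose_div_pow k (k + 1 - j - 1) j
      (by have := Finset.mem_range.1 hj; omega)).const_mul
        ((-1 : ℝ) ^ j * ((k + 1).choose j : ℝ))
  refine hlim.congr' ?_
  filter_upwards [eventually_ge_atTop k] with i hi
  have h : (hilbertH (k + 1) i : ℝ) = ∑ j ∈ Finset.range k,
      (-1 : ℝ) ^ j * ((k + 1).choose j : ℝ) * ((k + (i * (k - j) - j)).choose k : ℝ) := by
    exact_mod_cast congrArg (Int.cast : ℤ → ℝ) (hilbertH_eq_sum k i (by omega) hi)
  rw [h, Finset.mul_sum, Finset.sum_div]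
  refine Finset.sum_congr rfl fun j _ => ?_
  rw [show k + 1 - j - 1 = k - j by omega]
  ring
end

section
/- Let K be a field, R = K[x_1, …, x_n] with n ≥ 2, t ≥ 1 an integer, and M = M_{n,t} the ideal generated by the n monomials ∏_{j ≠ i} x_j^t. Then the minimal number of generators of M equals n, and the minimal number of generators of M^2 equals C(n+1, 2); consequently μ(M^2) = n·μ(M) − C(n, 2), i.e., M_{n,t} is a Freiman ideal (its analytic spread is ℓ(M) = n). -/
/-!
The `n` generators of `M` and the products `x^{e_i} x^{e_j}` generating `M ^ 2` are monomials, and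
in each of the two families no exponent is `≤` another one. Everything therefore rests on
`mu_span_monomial`: an ideal generated by monomials whose exponents form an antichain needs exactly
that many generators. For the lower bound, read off the coefficients of the generating monomials.
By `coeff_mul_of_mem_span`, on the ideal this `K`-linear map sends `r * f` to the constant
coefficient of `r` times the image of `f`, so the images of any generating set of the ideal span
the whole coordinate space over `K`.

For `M ^ 2` the products are indexed by unordered pairs, of which there are `(n + 1).choose 2`.
The exponent attached to a pair `z` is `t * (2 - mult_z)`, where `mult_z` counts the occurrences of
an index in `z`; comparing two such exponents compares the underlying two-element multisets, which
have the same cardinality and hence are equal.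
-/

/-- `mu J` is the minimal number of generators of the ideal `J`. -/
noncomputable def mu {R : Type*} [CommRing R] (J : Ideal R) : ℕ :=
  sInf {m | ∃ S : Finset R, S.card = m ∧ Ideal.span (S : Set R) = J}

open MvPolynomial in
/-- A monomial of an element `f` of the ideal is a multiple of some generator, so it can divide the
minimal generator with exponent `E i` only if it equals it. Hence only the constant term of `r`
contributes to the coefficient of `r * f` at `E i`. -/
lemma coeff_mul_of_mem_span {K σ ι : Type*} [Field K] (E : ι → σ →₀ ℕ)
    (hE : ∀ i j, E i ≤ E j → i = j) {f : MvPolynomial σ K}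
    (hf : f ∈ Ideal.span (Set.range fun i => monomial (E i) (1 : K)))
    (r : MvPolynomial σ K) (i : ι) :
    coeff (E i) (r * f) = coeff 0 r * coeff (E i) f := by
  classical
  rw [coeff_mul]
  refine Finset.sum_eq_single (0, E i) ?_ ?_
  · rintro ⟨u, v⟩ huv hne
    rw [Finset.HasAntidiagonal.mem_antidiagonal] at huv
    by_contra h
    have hv : v ∈ f.support := by
      rw [mem_support_iff]
      exact right_ne_zero_of_mul h
    rw [show (Set.range fun i => monomial (E i) (1 : K)) =
      (fun s => monomial s (1 : K)) '' Set.range E by rw [← Set.range_comp]; rfl,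
      mem_ideal_span_monomial_image] at hf
    obtain ⟨_, ⟨j, rfl⟩, hj⟩ := hf v hv
    have hvi : v ≤ E i := by
      rw [← huv]
      exact le_add_self
    obtain rfl := hE j i (hj.trans hvi)
    obtain rfl := le_antisymm hvi hj
    simp at huv
    simp [huv] at hne
  · simp

open MvPolynomial in
lemma mu_span_monomial {K σ ι : Type*} [Field K] [Fintype ι] (E : ι → σ →₀ ℕ)
    (hE : ∀ i j, E i ≤ E j → i = j) :
    mu (Ideal.span (Set.range fun i => monomial (E i) (1 : K))) = Fintype.card ι := by
  classical
  have hinj : Function.Injective fun i => monomial (E i) (1 : K) := fun i j h =>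
    hE i j (monomial_left_injective one_ne_zero h).le
  have hmem : Fintype.card ι ∈ {m | ∃ S : Finset (MvPolynomial σ K), S.card = m ∧
      Ideal.span (S : Set (MvPolynomial σ K)) =
        Ideal.span (Set.range fun i => monomial (E i) (1 : K))} :=
    ⟨Finset.univ.image fun i => monomial (E i) (1 : K),
      by rw [Finset.card_image_of_injective _ hinj, Finset.card_univ], by simp⟩
  refine le_antisymm (Nat.sInf_le hmem) (le_csInf ⟨_, hmem⟩ ?_)
  rintro _ ⟨S, rfl, hS⟩
  let φ : MvPolynomial σ K →ₗ[K] (ι → K) := LinearMap.pi fun i => lcoeff K (E i)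
  have hφ : ∀ f i, φ f i = coeff (E i) f := fun f i => rfl
  have hspan : ∀ f ∈ Ideal.span (S : Set (MvPolynomial σ K)),
      φ f ∈ Submodule.span K ((S.image φ : Finset (ι → K)) : Set (ι → K)) := by
    intro f hf
    induction hf using Submodule.span_induction with
    | mem x hx => exact Submodule.subset_span (by simpa using ⟨x, hx, rfl⟩)
    | zero => simp
    | add x y _ _ hx hy => simpa using add_mem hx hy
    | smul r x hx ih =>
      have : φ (r • x) = coeff 0 r • φ x := by
        ext i
        simp only [hφ, smul_eq_mul, Pi.smul_apply]
        exact coeff_mul_of_mem_span E hE (hS ▸ hx) r i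
      rw [this]
      exact Submodule.smul_mem _ _ ih
  have htop : Submodule.span K ((S.image φ : Finset (ι → K)) : Set (ι → K)) = ⊤ := by
    rw [eq_top_iff, ← (Pi.basisFun K ι).span_eq, Submodule.span_le]
    rintro _ ⟨i, rfl⟩
    have : φ (monomial (E i) 1) = Pi.basisFun K ι i := by
      ext j
      have hij : E i = E j ↔ j = i := ⟨fun h => (hE i j h.le).symm, fun h => by rw [h]⟩
      simp [hφ, coeff_monomial, hij, Pi.single_apply]
    rw [← this]
    exact hspan _ (hS ▸ Ideal.subset_span ⟨i, rfl⟩)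
  calc Fintype.card ι = Module.finrank K (ι → K) := by simp
    _ = Module.finrank K (Submodule.span K ((S.image φ : Finset (ι → K)) : Set (ι → K))) := by
      rw [htop, finrank_top]
    _ ≤ (S.image φ).card := finrank_span_finset_le_card _
    _ ≤ S.card := Finset.card_image_le

/-- The exponent `e_i` of the `i`-th generator of `M`: `0` at `i` and `t` elsewhere. -/
noncomputable def genExp (n t : ℕ) (i : Fin n) : Fin n →₀ ℕ :=
  Finsupp.equivFunOnFinite.symm fun j => if j = i then 0 else t

/-- The exponent `e_i + e_j` of a product of two generators of `M`, as a function of the unordered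
pair `z = {i, j}`. The truncated subtraction is exact: an index occurs at most twice in `z`. -/
noncomputable def sqExp (n t : ℕ) (z : Sym2 (Fin n)) : Fin n →₀ ℕ :=
  Finsupp.equivFunOnFinite.symm fun k => t * (2 - z.toMultiset.count k)

lemma sym2_toMultiset_mk {α : Type*} (a b : α) :
    (s(a, b) : Sym2 α).toMultiset = ({a, b} : Multiset α) := rfl

lemma sqExp_mk (n t : ℕ) (i j : Fin n) : sqExp n t s(i, j) = genExp n t i + genExp n t j := by
  ext k
  simp only [sqExp, genExp, Finsupp.equivFunOnFinite_symm_apply_apply, Finsupp.add_apply,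
    sym2_toMultiset_mk, Multiset.insert_eq_cons, Multiset.count_cons, Multiset.count_singleton]
  split_ifs <;> omega

lemma genExp_antichain {n t : ℕ} (ht : 1 ≤ t) (i j : Fin n)
    (h : genExp n t i ≤ genExp n t j) : i = j := by
  by_contra hij
  have := h j
  simp [genExp, Ne.symm hij] at this
  omega

lemma sqExp_antichain {n t : ℕ} (ht : 1 ≤ t) (z w : Sym2 (Fin n))
    (h : sqExp n t z ≤ sqExp n t w) : z = w := by
  have hle : w.toMultiset ≤ z.toMultiset := by
    rw [Multiset.le_iff_count]
    intro k
    have hk := h k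
    simp only [sqExp, Finsupp.equivFunOnFinite_symm_apply_apply] at hk
    have := Nat.le_of_mul_le_mul_left hk ht
    have := (w.toMultiset.count_le_card k).trans_eq w.card_toMultiset
    omega
  have heq := Multiset.eq_of_le_of_card_le hle
    (by rw [Sym2.card_toMultiset, Sym2.card_toMultiset])
  induction z using Sym2.ind with
  | _ a b =>
    induction w using Sym2.ind with
    | _ c d =>
      rw [sym2_toMultiset_mk, sym2_toMultiset_mk] at heq
      simp only [Multiset.insert_eq_cons, Multiset.cons_eq_cons, Multiset.singleton_eq_cons_iff,
        Multiset.singleton_inj] at heq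
      rw [Sym2.eq_iff]
      aesop

open MvPolynomial in
lemma prod_eq_monomial_genExp (K : Type*) [Field K] (n t : ℕ) (i : Fin n) :
    ∏ j ∈ Finset.univ.erase i, (X j : MvPolynomial (Fin n) K) ^ t =
      monomial (genExp n t i) (1 : K) := by
  rw [monomial_eq, Finsupp.prod_fintype _ _ (by simp), C_1, one_mul,
    ← Finset.prod_erase (a := i) Finset.univ
      (f := fun j => (X j : MvPolynomial (Fin n) K) ^ genExp n t i j) (by simp [genExp])]
  refine Finset.prod_congr rfl fun j hj => ?_
  simp [genExp, Finset.ne_of_mem_erase hj]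

open MvPolynomial in
theorem Mnt_is_Freiman (K : Type*) [Field K] (n t : ℕ) (hn : 2 ≤ n) (ht : 1 ≤ t)
    (M : Ideal (MvPolynomial (Fin n) K))
    (hM : M = Ideal.span (Set.range fun i : Fin n =>
      ∏ j ∈ Finset.univ.erase i, (X j : MvPolynomial (Fin n) K) ^ t)) :
    mu M = n ∧ mu (M ^ 2) = Nat.choose (n + 1) 2 ∧
      mu (M ^ 2) = n * mu M - Nat.choose n 2 := by
  simp only [prod_eq_monomial_genExp] at hM
  have hM2 : M ^ 2 = Ideal.span (Set.range fun z => monomial (sqExp n t z) (1 : K)) := by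
    rw [hM, sq, Ideal.span_mul_span']
    congr 1
    ext p
    simp only [Set.mem_mul, Set.mem_range, exists_exists_eq_and,
      monomial_mul, one_mul]
    constructor
    · rintro ⟨i, j, rfl⟩
      exact ⟨s(i, j), by rw [sqExp_mk]⟩
    · rintro ⟨z, rfl⟩
      induction z using Sym2.ind with
      | _ i j => exact ⟨i, j, by rw [sqExp_mk]⟩
  have h1 : mu M = n := by
    rw [hM, mu_span_monomial _ (genExp_antichain ht), Fintype.card_fin]
  have h2 : mu (M ^ 2) = Nat.choose (n + 1) 2 := by
    rw [hM2, mu_span_monomial _ (sqExp_antichain ht), Sym2.card, Fintype.card_fin]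
  refine ⟨h1, h2, ?_⟩
  have key : ∀ m : ℕ, m * m = Nat.choose (m + 1) 2 + Nat.choose m 2 := by
    intro m
    induction m with
    | zero => rfl
    | succ m ih =>
      have e1 : Nat.choose (m + 2) 2 = (m + 1) + Nat.choose (m + 1) 2 := by
        rw [Nat.choose_succ_succ' (m + 1) 1, Nat.choose_one_right]
      have e2 : Nat.choose (m + 1) 2 = m + Nat.choose m 2 := by
        rw [Nat.choose_succ_succ' m 1, Nat.choose_one_right]
      linarith
  rw [h2, h1, key n, Nat.add_sub_cancel]
end
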